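/- arXiv:2012.15789 — 3 statements merged into one kernel-verified Lean document; each statement's English description precedes it below -/
import Mathlib

section
/- If φ: ℝ² → ℝ is a mixed homogeneous polynomial with ∇φ(0) = 0 and det D²φ ≡ 0, then φ is a constant multiple of z₁^J, of z₂^J, or of (z₁ + λz₂)^J for some λ ∈ ℝ and J ∈ ℕ. -/
open MvPolynomial

/-- The Hessian determinant ω = ∂₁²φ·∂₂²φ − (∂₁∂₂φ)² of a two-variable polynomial. -/
noncomputable def hessDet (φ : MvPolynomial (Fin 2) ℝ) : MvPolynomial (Fin 2) ℝ :=
  pderiv 0 (pderiv 0 φ) * pderiv 1 (pderiv 1 φ) - (pderiv 0 (pderiv 1 φ)) ^ 2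

/-!
If the Hessian matrix of `φ` is singular and `∂₁²φ ≠ 0`, cancelling common factors puts it in the
form `d (b, a)ᵀ (b, a)` with `a`, `b` coprime. Symmetry of the third derivatives of `φ` then says
that the slope `μ = a / b` solves Burgers' equation `∂₂μ = μ ∂₁μ`. After clearing denominators,
coprimality makes `a` divide `∂₂a` and `b` divide `∂₁b`, so `a` is a polynomial in `z₁`, `b` one in
`z₂`, and `∂₁a = -∂₂b` is a constant `k`. Were `k ≠ 0`, the factor `d` would satisfy Euler's
identity, up to a translation, for homogeneous functions of degree `-3`. Hence `μ` is a constant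
`λ`, and `∂₂φ - λ ∂₁φ` is constant.

With `∇φ(0) = 0` this becomes `∂₂φ = λ ∂₁φ`, an equation that determines `φ` from `φ(z₁, 0)`, and
mixed homogeneity leaves at most one monomial in `φ(z₁, 0)`.
-/

section PartialDerivatives

variable {σ R : Type*}

section CommSemiring

variable [CommSemiring R]

theorem pderiv_pderiv_comm (i j : σ) (p : MvPolynomial σ R) :
    pderiv i (pderiv j p) = pderiv j (pderiv i p) := by
  classical
  ext d
  simp only [coeff_pderiv, add_right_comm d, Finsupp.add_apply, Finsupp.single_apply]
  obtain rfl | hij := eq_or_ne i j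
  · rfl
  · simp only [hij, hij.symm, if_false, Nat.add_zero]
    ring

theorem coeff_X_mul_pderiv (i : σ) (p : MvPolynomial σ R) (d : σ →₀ ℕ) :
    coeff d (X i * pderiv i p) = d i * coeff d p := by
  classical
  induction p using MvPolynomial.induction_on' with
  | add p q hp hq => simp only [map_add, mul_add, coeff_add, hp, hq]
  | monomial e a =>
    rw [X_mul_pderiv_monomial, coeff_smul, coeff_monomial]
    split_ifs with h <;> simp [h]

theorem totalDegree_pderiv_lt {i : σ} {p : MvPolynomial σ R} (h : pderiv i p ≠ 0) :
    (pderiv i p).totalDegree < p.totalDegree := by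
  have hpos : 0 < p.totalDegree := by
    by_contra! hp
    rw [totalDegree_eq_zero_iff_eq_C.1 (Nat.le_zero.1 hp), pderiv_C] at h
    exact h rfl
  refine (Finset.sup_lt_iff hpos).2 fun d hd => ?_
  have hmem : d + Finsupp.single i 1 ∈ p.support := by
    rw [mem_support_iff, coeff_pderiv] at *
    exact left_ne_zero_of_mul hd
  have hle := le_totalDegree hmem
  rw [Finsupp.sum_add_index' (by simp) (by simp), Finsupp.sum_single_index rfl] at hle
  omega

end CommSemiring

variable [CommRing R] [IsDomain R]

theorem pderiv_eq_zero_of_dvd_pderiv {i : σ} {p : MvPolynomial σ R} (h : p ∣ pderiv i p) :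
    pderiv i p = 0 := by
  by_contra hne
  exact (totalDegree_le_of_dvd_of_isDomain h hne).not_gt (totalDegree_pderiv_lt hne)

theorem euler_eigenvalue_eq_mul_totalDegree [Fintype σ] {p : MvPolynomial σ R} (hp : p ≠ 0)
    {k c : R} {v : σ → R} (h : ∑ i, (C k * X i + C (v i)) * pderiv i p = C c * p) :
    c = k * p.totalDegree := by
  obtain ⟨d, hd, hdeg⟩ := p.support.exists_mem_eq_sup (support_nonempty.2 hp)
    fun s => s.sum fun _ e => e
  have hlower (i : σ) : coeff d (pderiv i p) = 0 := by
    by_cases h0 : pderiv i p = 0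
    · rw [h0, coeff_zero]
    · exact coeff_eq_zero_of_totalDegree_lt ((totalDegree_pderiv_lt h0).trans_eq hdeg)
  have htop : k * (∑ i, (d i : R)) * coeff d p = c * coeff d p := by
    simpa only [coeff_sum, add_mul, coeff_add, mul_assoc, coeff_C_mul, coeff_X_mul_pderiv, hlower,
      mul_zero, add_zero, ← Finset.mul_sum, ← Finset.sum_mul] using congrArg (coeff d) h
  rw [totalDegree, hdeg, ← mul_right_cancel₀ (mem_support_iff.1 hd) htop,
    Finsupp.sum_fintype _ _ fun _ => rfl, Nat.cast_sum]

variable [CharZero R]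

theorem eq_C_constantCoeff_of_pderiv_eq_zero {p : MvPolynomial σ R} (h : ∀ i, pderiv i p = 0) :
    p = C (constantCoeff p) := by
  classical
  ext d
  rw [coeff_C]
  split_ifs with hd
  · rw [← hd, constantCoeff_eq]
  obtain ⟨i, hi⟩ := Finsupp.ne_iff.1 (Ne.symm hd)
  have hc := coeff_X_mul_pderiv i p d
  rw [h i, mul_zero, coeff_zero, zero_eq_mul, Nat.cast_eq_zero] at hc
  exact hc.resolve_left hi

theorem exists_eq_C_mul_X_add_C {i : σ} {k : R} {p : MvPolynomial σ R} (hi : pderiv i p = C k)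
    (h : ∀ j ≠ i, pderiv j p = 0) : ∃ v, p = C k * X i + C v := by
  refine ⟨_, sub_eq_iff_eq_add'.1 <| eq_C_constantCoeff_of_pderiv_eq_zero fun j => ?_⟩
  rw [map_sub, pderiv_C_mul]
  obtain rfl | hj := eq_or_ne j i
  · rw [hi, pderiv_X_self, mul_one, sub_self]
  · rw [h j hj, pderiv_X_of_ne hj.symm, mul_zero, sub_self]

end PartialDerivatives

section RankOneHessian

theorem exists_eq_mul_sq_of_mul_eq_sq {A : Type*} [CommRing A] [IsDomain A]
    [UniqueFactorizationMonoid A] {p q r : A} (hp : p ≠ 0) (h : p * r = q ^ 2) :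
    ∃ a b d : A, IsRelPrime a b ∧ p = d * b ^ 2 ∧ q = d * (a * b) ∧ r = d * a ^ 2 := by
  obtain ⟨b, a, e, hba, rfl, rfl⟩ := UniqueFactorizationMonoid.exists_reduced_factors p hp q
  have he : e ≠ 0 := left_ne_zero_of_mul hp
  have hb : b ≠ 0 := right_ne_zero_of_mul hp
  have hbr : b * r = e * a ^ 2 := mul_left_cancel₀ he (by linear_combination h)
  obtain ⟨d, rfl⟩ : b ∣ e := hba.pow_right.dvd_of_dvd_mul_right (Dvd.intro r hbr)
  refine ⟨a, b, d, hba.symm, by ring, by ring, mul_left_cancel₀ hb ?_⟩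
  linear_combination hbr

/-- Burgers' equation `E μ = μ * D μ` for `μ = a / b`, multiplied by `b ^ 3`. -/
theorem burgers_of_rankOne_closed {R A : Type*} [CommRing R] [CommRing A] [IsDomain A]
    [Algebra R A] (D E : Derivation R A A) {a b d : A} (hd : d ≠ 0)
    (h₁ : E (d * b ^ 2) = D (d * (a * b))) (h₂ : E (d * (a * b)) = D (d * a ^ 2)) :
    b * (b * E a - a * E b) = a * (b * D a - a * D b) := by
  simp only [Derivation.leibniz, Derivation.leibniz_pow, smul_eq_mul, nsmul_eq_mul] at h₁ h₂
  refine mul_left_cancel₀ hd ?_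
  push_cast at h₁ h₂
  linear_combination b * h₂ - a * h₁

variable {R : Type*} [CommRing R] [IsDomain R] [UniqueFactorizationMonoid R]

theorem pderiv_eq_zero_and_pderiv_eq_neg_of_burgers {σ : Type*} {i j : σ} {a b : MvPolynomial σ R}
    (hab : IsRelPrime a b) (hb : b ≠ 0)
    (h : b * (b * pderiv j a - a * pderiv j b) = a * (b * pderiv i a - a * pderiv i b)) :
    pderiv j a = 0 ∧ pderiv i b = 0 ∧ pderiv i a = -pderiv j b := by
  have haj : pderiv j a = 0 := pderiv_eq_zero_of_dvd_pderiv <|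
    (hab.pow_right (n := 2)).dvd_of_dvd_mul_left
      ⟨b * pderiv j b - a * pderiv i b + b * pderiv i a, by linear_combination h⟩
  have hbi : pderiv i b = 0 := pderiv_eq_zero_of_dvd_pderiv <|
    (hab.symm.pow_right (n := 2)).dvd_of_dvd_mul_left
      ⟨a * pderiv j b - b * pderiv j a + a * pderiv i a, by linear_combination h⟩
  refine ⟨haj, hbi, ?_⟩
  obtain rfl | ha := eq_or_ne a 0
  · have hbunit : IsUnit b := isRelPrime_zero_left.1 hab
    rw [pderiv_eq_zero_of_dvd_pderiv hbunit.dvd, map_zero, neg_zero]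
  · rw [haj, hbi] at h
    exact mul_left_cancel₀ (mul_ne_zero ha hb) (by linear_combination -h)

variable [CharZero R]

theorem exists_eq_C_of_rankOne_closed {a b d : MvPolynomial (Fin 2) R} (hab : IsRelPrime a b)
    (hb : b ≠ 0) (hd : d ≠ 0) (h₁ : pderiv 1 (d * b ^ 2) = pderiv 0 (d * (a * b)))
    (h₂ : pderiv 1 (d * (a * b)) = pderiv 0 (d * a ^ 2)) :
    ∃ a₀ b₀, a = C a₀ ∧ b = C b₀ := by
  obtain ⟨ha₁, hb₀, hneg⟩ := pderiv_eq_zero_and_pderiv_eq_neg_of_burgers hab hb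
    (burgers_of_rankOne_closed _ _ hd h₁ h₂)
  obtain ⟨k, hk⟩ : ∃ k, pderiv 1 b = C k := by
    refine ⟨_, eq_C_constantCoeff_of_pderiv_eq_zero <| Fin.forall_fin_two.2 ⟨?_, ?_⟩⟩
    · rw [pderiv_pderiv_comm, hb₀, map_zero]
    · rw [← neg_eq_iff_eq_neg.2 hneg, map_neg, pderiv_pderiv_comm, ha₁, map_zero, neg_zero]
  obtain ⟨v₀, hv₀⟩ : ∃ v, -a = C k * X 0 + C v :=
    exists_eq_C_mul_X_add_C (by rw [map_neg, hneg, neg_neg, hk]) <| by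
      simp [Fin.forall_fin_two, ha₁]
  obtain ⟨v₁, hv₁⟩ : ∃ v, b = C k * X 1 + C v :=
    exists_eq_C_mul_X_add_C hk <| by simp [Fin.forall_fin_two, hb₀]
  have heuler : ∑ i, (C k * X i + C (![v₀, v₁] i)) * pderiv i d = C (-3 * k) * d := by
    simp only [Fin.sum_univ_two, Matrix.cons_val_zero, Matrix.cons_val_one, ← hv₀, ← hv₁]
    simp only [pderiv_mul, pderiv_pow, hb₀, hneg, hk] at h₁
    push_cast at h₁
    rw [C_mul, C_neg, map_ofNat]
    exact mul_left_cancel₀ hb (by linear_combination h₁)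
  have hk0 : k = 0 := by
    have hdeg : k * (d.totalDegree + 3 : ℕ) = 0 := by
      push_cast
      linear_combination -euler_eigenvalue_eq_mul_totalDegree hd heuler
    exact (mul_eq_zero.1 hdeg).resolve_right (Nat.cast_ne_zero.2 (by omega))
  refine ⟨-v₀, v₁, ?_, ?_⟩
  · rw [C_neg, ← neg_eq_iff_eq_neg, hv₀, hk0, C_0, zero_mul, zero_add]
  · rw [hv₁, hk0, C_0, zero_mul, zero_add]

theorem pderiv_eq_C_or_of_hessian_eq_zero {K : Type*} [Field K] [CharZero K]
    {φ : MvPolynomial (Fin 2) K}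
    (hφ : pderiv 0 (pderiv 0 φ) * pderiv 1 (pderiv 1 φ) - pderiv 0 (pderiv 1 φ) ^ 2 = 0) :
    (∃ c, pderiv 0 φ = C c) ∨ ∃ l c, pderiv 1 φ = C l * pderiv 0 φ + C c := by
  by_cases h00 : pderiv 0 (pderiv 0 φ) = 0
  · have h01 : pderiv 0 (pderiv 1 φ) = 0 := by simpa [h00] using hφ
    exact Or.inl ⟨_, eq_C_constantCoeff_of_pderiv_eq_zero <|
      Fin.forall_fin_two.2 ⟨h00, by rw [pderiv_pderiv_comm, h01]⟩⟩
  obtain ⟨a, b, d, hab, hp, hq, hr⟩ := exists_eq_mul_sq_of_mul_eq_sq h00 (sub_eq_zero.1 hφ)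
  have hd : d ≠ 0 := by rintro rfl; exact h00 (by rw [hp, zero_mul])
  have hb : b ≠ 0 := by rintro rfl; exact h00 (by rw [hp]; ring)
  obtain ⟨a, b, rfl, rfl⟩ := exists_eq_C_of_rankOne_closed hab hb hd
    (by rw [← hp, ← hq, pderiv_pderiv_comm, pderiv_pderiv_comm 1 0])
    (by rw [← hq, ← hr, pderiv_pderiv_comm])
  have hslope : C (a / b) * C b = (C a : MvPolynomial (Fin 2) K) := by
    rw [← C_mul, div_mul_cancel₀ a (by rintro rfl; exact hb C_0)]
  refine Or.inr ⟨a / b, _, sub_eq_iff_eq_add'.1 <| eq_C_constantCoeff_of_pderiv_eq_zero <|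
    Fin.forall_fin_two.2 ⟨?_, ?_⟩⟩
  · rw [map_sub, pderiv_C_mul, hp, hq]
    linear_combination -d * C b * hslope
  · rw [map_sub, pderiv_C_mul, pderiv_pderiv_comm 1 0, hq, hr]
    linear_combination -d * C a * hslope

end RankOneHessian

section LinearForm

variable {R : Type*} [CommRing R] [IsDomain R] [CharZero R] {i j : Fin 2} {l : R}
  {φ : MvPolynomial (Fin 2) R}

theorem eq_zero_of_pderiv_eq_C_mul_pderiv (hij : i ≠ j) (h : pderiv j φ = C l * pderiv i φ)
    (hpure : ∀ n, coeff (Finsupp.single i n) φ = 0) : φ = 0 := by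
  have hcoeff (m n : ℕ) : coeff (Finsupp.single i n + Finsupp.single j m) φ = 0 := by
    induction m generalizing n with
    | zero => rw [Finsupp.single_zero, add_zero, hpure]
    | succ m ih =>
      have hrec := congrArg (coeff (Finsupp.single i n + Finsupp.single j m)) h
      rw [coeff_C_mul, coeff_pderiv, coeff_pderiv, add_assoc, ← Finsupp.single_add,
        add_right_comm (Finsupp.single i n), ← Finsupp.single_add, ih, zero_mul, mul_zero] at hrec
      exact (mul_eq_zero.1 hrec).resolve_right (Nat.cast_add_one_ne_zero _)
  ext d
  have hd : d = Finsupp.single i (d i) + Finsupp.single j (d j) := by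
    ext k
    obtain rfl | rfl : k = i ∨ k = j := by omega
    · simp [hij]
    · simp [hij.symm]
  rw [hd, hcoeff, coeff_zero]

theorem coeff_single_X_add_C_mul_X_pow {R σ : Type*} [CommRing R] {i j : σ} (hij : i ≠ j) (l : R)
    (n k : ℕ) :
    coeff (Finsupp.single i k) ((X i + C l * X j : MvPolynomial σ R) ^ n) =
      if k = n then 1 else 0 := by
  classical
  obtain ⟨q, hq⟩ : (X j : MvPolynomial σ R) ∣ (X i + C l * X j) ^ n - X i ^ n :=
    (Dvd.intro_left (C l) (by ring)).trans (sub_dvd_pow_sub_pow _ _ n)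
  have hj : j ∉ (Finsupp.single i k).support := by simp [hij]
  rw [sub_eq_iff_eq_add.1 hq, coeff_add, coeff_X_mul', if_neg hj, zero_add, coeff_X_pow]
  simp only [(Finsupp.single_injective i).eq_iff, eq_comm]

theorem eq_C_mul_pow_of_pderiv_eq_C_mul_pderiv (hij : i ≠ j)
    (h : pderiv j φ = C l * pderiv i φ) {n : ℕ}
    (hpure : ∀ k ≠ n, coeff (Finsupp.single i k) φ = 0) :
    φ = C (coeff (Finsupp.single i n) φ) * (X i + C l * X j) ^ n := by
  refine sub_eq_zero.1 <| eq_zero_of_pderiv_eq_C_mul_pderiv hij (l := l) ?_ fun k => ?_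
  · simp only [map_sub, map_add, pderiv_C_mul, pderiv_pow, pderiv_X_self, pderiv_X_of_ne hij,
      pderiv_X_of_ne hij.symm, h]
    ring
  · rw [coeff_sub, coeff_C_mul, coeff_single_X_add_C_mul_X_pow hij]
    split_ifs with hk
    · rw [hk, mul_one, sub_self]
    · rw [hpure k hk, mul_zero, sub_zero]

end LinearForm

section MixedHomogeneity

theorem coeff_bind₁_C_mul_X {σ R : Type*} [CommSemiring R] (a : σ → R) (p : MvPolynomial σ R)
    (d : σ →₀ ℕ) :
    coeff d (bind₁ (fun i => C (a i) * X i) p) = (d.prod fun i n => a i ^ n) * coeff d p := by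
  classical
  induction p using MvPolynomial.induction_on' with
  | add p q hp hq => simp only [map_add, coeff_add, mul_add, hp, hq]
  | monomial e c =>
    have hmon : bind₁ (fun i => C (a i) * X i) (monomial e c) =
        C (e.prod fun i n => a i ^ n) * monomial e c := by
      rw [monomial_eq (s := e), map_mul, bind₁_C_right, Finsupp.prod, Finsupp.prod, map_prod,
        map_prod]
      simp only [map_pow, bind₁_X_right, mul_pow, Finset.prod_mul_distrib]
      ring
    rw [hmon, coeff_C_mul, coeff_monomial]
    split_ifs with h <;> simp [h]

theorem isWeightedHomogeneous_of_eval_rpow_mul {σ : Type*} {φ : MvPolynomial σ ℝ} {κ : σ → ℝ}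
    {m t : ℝ} (ht : 0 < t) (ht₁ : t ≠ 1)
    (h : ∀ z, eval (fun i => t ^ κ i * z i) φ = t ^ m * eval z φ) :
    IsWeightedHomogeneous κ φ m := by
  intro d hd
  have hbind : bind₁ (fun i => C (t ^ κ i) * X i) φ = C (t ^ m) * φ := by
    refine funext fun z => (eval₂Hom_bind₁ _ _ _ φ).trans ?_
    rw [map_mul, eval_C, ← h z]
    simp only [map_mul, eval₂Hom_C, eval₂Hom_X', RingHom.id_apply]
    rfl
  have hpow : t ^ (∑ i ∈ d.support, κ i * d i) = t ^ m := by
    have hcoeff := congrArg (coeff d) hbind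
    rw [coeff_bind₁_C_mul_X, coeff_C_mul] at hcoeff
    simpa only [Finsupp.prod, ← Real.rpow_mul_natCast ht.le, ← Real.rpow_sum_of_pos ht]
      using mul_right_cancel₀ hd hcoeff
  rw [← (Real.rpow_right_inj ht ht₁).1 hpow, Finsupp.weight_apply, Finsupp.sum]
  simp only [nsmul_eq_mul, mul_comm]

theorem exists_forall_ne_coeff_single_eq_zero {σ R M : Type*} [CommSemiring R]
    [AddCancelCommMonoid M] [IsAddTorsionFree M] {w : σ → M} {m : M} {φ : MvPolynomial σ R}
    (hφ : IsWeightedHomogeneous w φ m) (hm : m ≠ 0) (i : σ) :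
    ∃ n, ∀ k ≠ n, coeff (Finsupp.single i k) φ = 0 := by
  by_cases hex : ∃ n, coeff (Finsupp.single i n) φ ≠ 0
  · obtain ⟨n, hn⟩ := hex
    have hwn : n • w i = m := by simpa [Finsupp.weight_single] using hφ hn
    have hwi : w i ≠ 0 := by
      intro h
      exact hm (by rw [← hwn, h, nsmul_zero])
    refine ⟨n, fun k hkn => ?_⟩
    by_contra hk
    have hwk : k • w i = m := by simpa [Finsupp.weight_single] using hφ hk
    exact hkn ((IsAddLeftRegular.all (w i)).nsmul_injective hwi (hwk.trans hwn.symm))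
  · push Not at hex
    exact ⟨0, fun k _ => hex k⟩

end MixedHomogeneity

theorem stmt_6_general {K M : Type*} [Field K] [CharZero K] [AddCancelCommMonoid M]
    [IsAddTorsionFree M] {w : Fin 2 → M} {m : M} (hm : m ≠ 0) {φ : MvPolynomial (Fin 2) K}
    (hφ : IsWeightedHomogeneous w φ m) (hgrad : ∀ i, constantCoeff (pderiv i φ) = 0)
    (hω : pderiv 0 (pderiv 0 φ) * pderiv 1 (pderiv 1 φ) - pderiv 0 (pderiv 1 φ) ^ 2 = 0) :
    ∃ (c : K) (J : ℕ),
      φ = C c * X 0 ^ J ∨ φ = C c * X 1 ^ J ∨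
      ∃ lam : K, φ = C c * (X 0 + C lam * X 1) ^ J := by
  rcases pderiv_eq_C_or_of_hessian_eq_zero hω with ⟨c, hc⟩ | ⟨l, c, hc⟩
  · obtain ⟨n, hn⟩ := exists_forall_ne_coeff_single_eq_zero hφ hm 1
    have hc0 : c = 0 := by simpa [hc] using hgrad 0
    have hpow := eq_C_mul_pow_of_pderiv_eq_C_mul_pderiv (l := 0) one_ne_zero
      (by rw [hc, hc0, C_0, zero_mul]) hn
    rw [C_0, zero_mul, add_zero] at hpow
    exact ⟨_, n, Or.inr (Or.inl hpow)⟩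
  · obtain ⟨n, hn⟩ := exists_forall_ne_coeff_single_eq_zero hφ hm 0
    have hc0 : c = 0 := by simpa [hgrad] using (congrArg constantCoeff hc).symm
    rw [hc0, C_0, add_zero] at hc
    exact ⟨_, n, Or.inr (Or.inr ⟨l, eq_C_mul_pow_of_pderiv_eq_C_mul_pderiv zero_ne_one hc hn⟩)⟩

/-- If φ is a mixed homogeneous polynomial on ℝ² with ∇φ(0) = 0 and vanishing Hessian
determinant, then φ is a constant multiple of z₁^J, z₂^J, or (z₁ + λz₂)^J. -/
theorem stmt_6 (φ : MvPolynomial (Fin 2) ℝ)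
    (hmh : ∃ κ₁ κ₂ : ℝ, 0 < κ₁ ∧ 0 < κ₂ ∧ ∀ σ > (0 : ℝ), ∀ z₁ z₂ : ℝ,
      eval ![σ ^ κ₁ * z₁, σ ^ κ₂ * z₂] φ = σ * eval ![z₁, z₂] φ)
    (hgrad₁ : eval ![(0 : ℝ), 0] (pderiv 0 φ) = 0)
    (hgrad₂ : eval ![(0 : ℝ), 0] (pderiv 1 φ) = 0)
    (hω : hessDet φ = 0) :
    ∃ (c : ℝ) (J : ℕ),
      φ = C c * X 0 ^ J ∨ φ = C c * X 1 ^ J ∨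
      ∃ lam : ℝ, φ = C c * (X 0 + C lam * X 1) ^ J := by
  obtain ⟨κ₁, κ₂, -, -, hscale⟩ := hmh
  have hw : IsWeightedHomogeneous ![κ₁, κ₂] φ (1 : ℝ) := by
    refine isWeightedHomogeneous_of_eval_rpow_mul two_pos (by norm_num) fun z => ?_
    have hz : z = ![z 0, z 1] := funext (Fin.forall_fin_two.2 ⟨rfl, rfl⟩)
    rw [Real.rpow_one, hz, ← hscale 2 two_pos]
    exact congrArg (eval · φ) (funext (Fin.forall_fin_two.2 ⟨rfl, rfl⟩))
  have hzero : ![(0 : ℝ), 0] = 0 := funext (Fin.forall_fin_two.2 ⟨rfl, rfl⟩)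
  rw [hzero, eval_zero] at hgrad₁ hgrad₂
  exact stmt_6_general one_ne_zero hw (Fin.forall_fin_two.2 ⟨hgrad₁, hgrad₂⟩) hω
end

section
/- Define T f(x) := ∫_{ℝ²} f(x₁ − t₁, x₂ − t₂, x₃ − (t₂ − t₁²)³) dt₁ dt₂ for x ∈ ℝ³, i.e. the averaging operator over all of ℝ² associated to φ(t₁,t₂) = (t₂ − t₁²)³. Then there is a constant C < ∞ such that ‖Tf‖_{L³(ℝ³)} ≤ C ‖f‖_{L^{3/2}(ℝ³)} for all nonnegative measurable f; that is, T is bounded from L^{3/2}(ℝ³) to L³(ℝ³). -/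
open MeasureTheory MvPolynomial
open scoped ENNReal

/-- The averaging operator `T_R f(x) = ∫_R f(x₁ − t₁, x₂ − t₂, x₃ − φ(t)) dt`
acting on nonnegative measurable functions on ℝ³. -/
noncomputable def avgOp (φ : ℝ × ℝ → ℝ) (R : Set (ℝ × ℝ))
    (f : ℝ × ℝ × ℝ → ℝ≥0∞) (x : ℝ × ℝ × ℝ) : ℝ≥0∞ :=
  ∫⁻ t in R, f (x.1 - t.1, x.2.1 - t.2, x.2.2 - φ t)

/-- The bilinear pairing `⟨T_R χ_E, χ_F⟩`. -/
noncomputable def pairing (φ : ℝ × ℝ → ℝ) (R : Set (ℝ × ℝ))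
    (E F : Set (ℝ × ℝ × ℝ)) : ℝ≥0∞ :=
  ∫⁻ x, avgOp φ R (E.indicator 1) x * F.indicator 1 x

/-- `T_R` is of restricted weak type `(p,q)`, written in terms of the reciprocals
`pinv = 1/p`, `qinv = 1/q` (so `1 ≤ p, q ≤ ∞` corresponds to `pinv, qinv ∈ [0,1]`):
there is `C < ∞` with `⟨T_R χ_E, χ_F⟩ ≤ C |E|^{1/p} |F|^{1−1/q}` for all measurable
`E, F ⊆ ℝ³` of finite measure. -/
def RWT (φ : ℝ × ℝ → ℝ) (R : Set (ℝ × ℝ)) (pinv qinv : ℝ) : Prop :=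
  ∃ C : ℝ, 0 ≤ C ∧ ∀ E F : Set (ℝ × ℝ × ℝ), MeasurableSet E → MeasurableSet F →
    volume E < ⊤ → volume F < ⊤ →
    pairing φ R E F ≤ ENNReal.ofReal C * volume E ^ pinv * volume F ^ (1 - qinv)

/-- The unit square `[−1,1]²` in ℝ². -/
def unitSquare : Set (ℝ × ℝ) := Set.Icc ((-1, -1) : ℝ × ℝ) (1, 1)

/-!
Write `γ t = (t, φ(t))`, so that `T f x = ∫ f (x - γ t) dt`. Expanding `(T f x)³` as a triple
integral and letting the largest of the three values of `f` be `f (x - γ t)`, one gets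
`(T f x)³ ≤ 4 ∫ f (x - γ t) (∫ f_l (x - γ s) ds)² dt`, where `l = f (x - γ t)` and `f_l` is `f` cut
off to `{f ≤ l}`. Substituting `y = x - γ t` for `x` reduces the theorem to
`∫ (∫ g (γ t - γ s) ds)² dt ≤ K l^(1/2) ∫ g^(3/2)` for functions `0 ≤ g ≤ l`.

In the coordinates `t = (τ, σ + τ²)` and `(τ - u, s + (τ - u)²)` the difference of two points of the
surface is `(u, 2uτ + σ - s - u², σ³ - s³)`. The `u`-integral is controlled by the one-dimensional
inequality `(∫ g)² ≤ 8 l^(1/2) ∫ g^(3/2) |u| du`, whose factor `|u|` is exactly the Jacobian of the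
substitution `x = 2uτ + σ - s - u²` in the `τ`-integral. The `s`-integral is taken out of the square
by Cauchy–Schwarz with a weight in `(σ³, s³)` that is a product of powers, for which the two
integrals to be bounded are convergent Beta integrals.
-/

open Set Function

section PowersOfIntegrals

variable {α : Type*} [MeasurableSpace α]

theorem measure_univ_pow_succ_le {ν : Measure α} [SFinite ν] {β : Type*} [LinearOrder β]
    [TopologicalSpace β] [OrderClosedTopology β] [SecondCountableTopology β] [MeasurableSpace β]
    [OpensMeasurableSpace β] {f : α → β} (hf : Measurable f) (n : ℕ) :
    ν univ ^ (n + 1) ≤ 2 ^ n * ∫⁻ a, ν {b | f b ≤ f a} ^ n ∂ν := by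
  set F : α → ℝ≥0∞ := fun a => ν {b | f b ≤ f a}
  have hF : Measurable F := measurable_measure_prodMk_left
    (measurableSet_le (hf.comp measurable_snd) (hf.comp measurable_fst))
  have hlt : MeasurableSet {p : α × α | f p.1 < f p.2} :=
    measurableSet_lt (hf.comp measurable_fst) (hf.comp measurable_snd)
  induction n with
  | zero => simp
  | succ n ih =>
    have hswap : ∫⁻ a, F a ^ n * ν {b | f a < f b} ∂ν ≤ ∫⁻ b, F b ^ (n + 1) ∂ν := calc
      ∫⁻ a, F a ^ n * ν {b | f a < f b} ∂ν
          = ∫⁻ a, ∫⁻ b, {p : α × α | f p.1 < f p.2}.indicator (fun p => F p.1 ^ n) (a, b) ∂ν ∂ν :=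
        lintegral_congr fun a =>
          (lintegral_indicator_const (measurable_prodMk_left hlt) (F a ^ n)).symm
      _ = ∫⁻ b, ∫⁻ a, {p : α × α | f p.1 < f p.2}.indicator (fun p => F p.1 ^ n) (a, b) ∂ν ∂ν :=
        lintegral_lintegral_swap (Measurable.aemeasurable (by fun_prop (disch := exact hlt)))
      _ ≤ ∫⁻ b, ∫⁻ a, {a | f a ≤ f b}.indicator (fun _ => F b ^ n) a ∂ν ∂ν := by
        refine lintegral_mono fun b => lintegral_mono fun a => ?_
        refine indicator_apply_le' (fun hab => ?_) fun _ => zero_le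
        have hab : f a ≤ f b := le_of_lt hab
        rw [indicator_of_mem (show a ∈ {a | f a ≤ f b} from hab)]
        gcongr
        exact measure_mono fun c hc => le_trans hc hab
      _ = ∫⁻ b, F b ^ (n + 1) ∂ν := lintegral_congr fun b => by
        rw [lintegral_indicator_const (measurableSet_le hf measurable_const), pow_succ]
    calc ν univ ^ (n + 1 + 1)
        ≤ 2 ^ n * (∫⁻ a, F a ^ n ∂ν) * ν univ := by rw [pow_succ]; gcongr
      _ = 2 ^ n * ∫⁻ a, (F a ^ (n + 1) + F a ^ n * ν {b | f a < f b}) ∂ν := by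
        rw [mul_assoc, ← lintegral_mul_const _ (by fun_prop)]
        congr with a
        rw [pow_succ, ← mul_add, ← measure_add_measure_compl
          (measurableSet_le hf (measurable_const (a := f a)))]
        simp only [F, compl_ofPred, not_le]
      _ = 2 ^ n * (∫⁻ a, F a ^ (n + 1) ∂ν + ∫⁻ a, F a ^ n * ν {b | f a < f b} ∂ν) := by
        rw [lintegral_add_left (by fun_prop)]
      _ ≤ 2 ^ n * (∫⁻ a, F a ^ (n + 1) ∂ν + ∫⁻ a, F a ^ (n + 1) ∂ν) := by gcongr
      _ = 2 ^ (n + 1) * ∫⁻ a, F a ^ (n + 1) ∂ν := by ring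

theorem lintegral_pow_succ_le {μ : Measure α} [SFinite μ] {g : α → ℝ≥0∞} (hg : Measurable g)
    {β : Type*} [LinearOrder β] [TopologicalSpace β] [OrderClosedTopology β]
    [SecondCountableTopology β] [MeasurableSpace β] [OpensMeasurableSpace β] {f : α → β}
    (hf : Measurable f) (n : ℕ) :
    (∫⁻ a, g a ∂μ) ^ (n + 1) ≤
      2 ^ n * ∫⁻ a, g a * (∫⁻ b, {b | f b ≤ f a}.indicator g b ∂μ) ^ n ∂μ := by
  have hle (a : α) : MeasurableSet {b | f b ≤ f a} := measurableSet_le hf measurable_const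
  have hF : Measurable fun a => μ.withDensity g {b | f b ≤ f a} := measurable_measure_prodMk_left
    (measurableSet_le (hf.comp measurable_snd) (hf.comp measurable_fst))
  have h := measure_univ_pow_succ_le (ν := μ.withDensity g) hf n
  rw [lintegral_withDensity_eq_lintegral_mul _ hg (hF.pow_const n)] at h
  simpa only [Pi.mul_apply, withDensity_apply _ MeasurableSet.univ, Measure.restrict_univ,
    withDensity_apply _ (hle _), lintegral_indicator (hle _)] using h

end PowersOfIntegrals

section Averages

variable {G : Type*} [AddCommGroup G] [MeasurableSpace G] [MeasurableAdd₂ G] [MeasurableSub₂ G]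
  {ρ : Measure G} [SFinite ρ] [ρ.IsAddLeftInvariant]

theorem lintegral_lintegral_mul_comp_sub [MeasurableNeg G] [ρ.IsNegInvariant] {V : G → G → ℝ≥0∞}
    (hV : Measurable (uncurry V)) {H : G → ℝ≥0∞} (hH : Measurable H) :
    ∫⁻ p, ∫⁻ q, V p q * H (p - q) ∂ρ ∂ρ = ∫⁻ z, (∫⁻ p, V p (p - z) ∂ρ) * H z ∂ρ := calc
  ∫⁻ p, ∫⁻ q, V p q * H (p - q) ∂ρ ∂ρ = ∫⁻ p, ∫⁻ z, V p (p - z) * H z ∂ρ ∂ρ := by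
    congr with p
    rw [← lintegral_sub_left_eq_self _ p]
    simp only [sub_sub_cancel]
  _ = ∫⁻ z, (∫⁻ p, V p (p - z) ∂ρ) * H z ∂ρ := by
    rw [lintegral_lintegral_swap (by fun_prop)]
    congr with z
    rw [lintegral_mul_const _ (by fun_prop)]

theorem lintegral_pow_succ_lintegral_sub_le {β : Type*} [MeasurableSpace β] {μ : Measure β}
    [SFinite μ] {γ : β → G} (hγ : Measurable γ) {n : ℕ} {a b : ℝ} (ha : 0 ≤ a)
    (hb : 0 ≤ b) {K : ℝ≥0∞}
    (h : ∀ (g : G → ℝ≥0∞) (l : ℝ≥0∞), Measurable g → (∀ x, g x ≤ l) →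
      ∫⁻ t, (∫⁻ s, g (γ t - γ s) ∂μ) ^ n ∂μ ≤ K * l ^ a * ∫⁻ x, g x ^ b ∂ρ)
    {f : G → ℝ≥0∞} (hf : Measurable f) :
    ∫⁻ x, (∫⁻ t, f (x - γ t) ∂μ) ^ (n + 1) ∂ρ ≤
      2 ^ n * K * (∫⁻ x, f x ^ (1 + a) ∂ρ) * ∫⁻ x, f x ^ b ∂ρ := by
  set T : ℝ≥0∞ → G → ℝ≥0∞ := fun l => {z | f z ≤ l}.indicator f
  have hT : Measurable (uncurry T) := (hf.comp measurable_snd).indicator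
    (measurableSet_le (hf.comp measurable_snd) measurable_fst)
  set S : G → β → ℝ≥0∞ := fun y t => ∫⁻ s, T (f y) (y + (γ t - γ s)) ∂μ
  have hS : Measurable (uncurry S) := by fun_prop
  have hSn (y : G) : ∫⁻ t, S y t ^ n ∂μ ≤ K * f y ^ a * ∫⁻ x, f x ^ b ∂ρ := calc
    ∫⁻ t, S y t ^ n ∂μ ≤ K * f y ^ a * ∫⁻ x, T (f y) (y + x) ^ b ∂ρ :=
      h (fun z => T (f y) (y + z)) (f y) (by fun_prop) fun z =>
        indicator_apply_le' id fun _ => zero_le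
    _ = K * f y ^ a * ∫⁻ x, T (f y) x ^ b ∂ρ := by
      rw [lintegral_add_left_eq_self fun x => T (f y) x ^ b]
    _ ≤ K * f y ^ a * ∫⁻ x, f x ^ b ∂ρ := by
      gcongr
      exact indicator_le_self _ _ _
  calc ∫⁻ x, (∫⁻ t, f (x - γ t) ∂μ) ^ (n + 1) ∂ρ
      ≤ ∫⁻ x, 2 ^ n * ∫⁻ t, f (x - γ t) * S (x - γ t) t ^ n ∂μ ∂ρ := by
        refine lintegral_mono fun x => ?_
        simp only [S, sub_add_sub_cancel]
        exact lintegral_pow_succ_le (by fun_prop) (by fun_prop) n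
    _ = 2 ^ n * ∫⁻ t, ∫⁻ x, f (x - γ t) * S (x - γ t) t ^ n ∂ρ ∂μ := by
        rw [lintegral_const_mul _ (by fun_prop), lintegral_lintegral_swap (by fun_prop)]
    _ = 2 ^ n * ∫⁻ t, ∫⁻ y, f y * S y t ^ n ∂ρ ∂μ := by
        congr with t
        exact lintegral_sub_right_eq_self (fun y => f y * S y t ^ n) (γ t)
    _ = 2 ^ n * ∫⁻ y, f y * ∫⁻ t, S y t ^ n ∂μ ∂ρ := by
        rw [lintegral_lintegral_swap (by fun_prop)]
        congr with y
        rw [lintegral_const_mul _ (by fun_prop)]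
    _ ≤ 2 ^ n * ∫⁻ y, f y * (K * f y ^ a * ∫⁻ x, f x ^ b ∂ρ) ∂ρ := by
        gcongr with y
        exact hSn y
    _ = 2 ^ n * K * (∫⁻ x, f x ^ (1 + a) ∂ρ) * ∫⁻ x, f x ^ b ∂ρ := by
        have hpow (y : G) : f y * (K * f y ^ a * ∫⁻ x, f x ^ b ∂ρ) =
            K * (∫⁻ x, f x ^ b ∂ρ) * f y ^ (1 + a) := by
          rw [ENNReal.rpow_add_of_nonneg _ _ zero_le_one ha, ENNReal.rpow_one]
          ring
        simp only [hpow]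
        rw [lintegral_const_mul _ (by fun_prop)]
        ring

end Averages

section RealLine

theorem lintegral_comp_mul_left {c : ℝ} (hc : c ≠ 0) (F : ℝ → ℝ≥0∞) :
    ∫⁻ x, F (c * x) = ENNReal.ofReal |c|⁻¹ * ∫⁻ x, F x := by
  rw [← smul_eq_mul, ← abs_inv, ← lintegral_smul_measure, ← Real.map_volume_mul_left hc]
  exact ((Homeomorph.mulLeft₀ c hc).measurableEmbedding.lintegral_map F).symm

theorem surjective_pow_of_odd {n : ℕ} (hn : Odd n) : Surjective fun x : ℝ => x ^ n := by
  have htop : Filter.Tendsto (fun x : ℝ => x ^ n) Filter.atTop Filter.atTop :=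
    Filter.tendsto_pow_atTop hn.pos.ne'
  refine Continuous.surjective (continuous_pow n) htop ?_
  exact (Filter.tendsto_neg_atTop_atBot.comp
    (htop.comp Filter.tendsto_neg_atBot_atTop)).congr fun x => by simp [hn.neg_pow]

theorem lintegral_comp_pow_of_odd {n : ℕ} (hn : Odd n) (Φ : ℝ → ℝ≥0∞) :
    ∫⁻ x, Φ (x ^ n) =
      ENNReal.ofReal (n : ℝ)⁻¹ * ∫⁻ y, ENNReal.ofReal (|y| ^ ((n : ℝ)⁻¹ - 1)) * Φ y := by
  have hn0 : n ≠ 0 := hn.pos.ne'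
  have hjac {x : ℝ} (hx : x ≠ 0) :
      (n : ℝ)⁻¹ * (|(n * x ^ (n - 1) : ℝ)| * |x ^ n| ^ ((n : ℝ)⁻¹ - 1)) = 1 := by
    have hx' : 0 < |x| := abs_pos.2 hx
    have hnR : (n : ℝ) ≠ 0 := Nat.cast_ne_zero.2 hn0
    rw [abs_mul, Nat.abs_cast, abs_pow, abs_pow, ← Real.rpow_natCast, ← Real.rpow_natCast,
      ← Real.rpow_mul hx'.le, mul_assoc, ← Real.rpow_add hx', inv_mul_cancel_left₀ hnR,
      Nat.cast_sub hn.pos]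
    convert Real.rpow_zero |x|
    field
  have hsubst := lintegral_image_eq_lintegral_abs_deriv_mul (s := univ) MeasurableSet.univ
    (fun x _ => (hasDerivAt_pow n x).hasDerivWithinAt) hn.strictMono_pow.injective.injOn
    fun y => ENNReal.ofReal (|y| ^ ((n : ℝ)⁻¹ - 1)) * Φ y
  rw [image_univ, (surjective_pow_of_odd hn).range_eq, Measure.restrict_univ] at hsubst
  rw [hsubst, ← lintegral_const_mul' _ _ ENNReal.ofReal_ne_top]
  refine lintegral_congr_ae ?_
  filter_upwards [Measure.ae_ne volume (0 : ℝ)] with x hx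
  rw [← mul_assoc, ← mul_assoc, mul_assoc (ENNReal.ofReal _), ← ENNReal.ofReal_mul (abs_nonneg _),
    ← ENNReal.ofReal_mul (by positivity), hjac hx, ENNReal.ofReal_one, one_mul]

theorem lintegral_comp_abs (F : ℝ → ℝ≥0∞) :
    ∫⁻ x, F |x| = 2 * ∫⁻ x in Ioi 0, F x := by
  have hpos : ∫⁻ x in Ioi (0 : ℝ), F |x| = ∫⁻ x in Ioi 0, F x :=
    setLIntegral_congr_fun measurableSet_Ioi fun x hx => by rw [abs_of_pos hx]
  have hneg : ∫⁻ x in Iio (0 : ℝ), F |x| = ∫⁻ x in Ioi 0, F |x| := by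
    simpa using (Measure.measurePreserving_neg (volume : Measure ℝ)).setLIntegral_comp_preimage_emb
      (Homeomorph.neg ℝ).measurableEmbedding (fun x => F |x|) (Ioi 0)
  rw [← lintegral_add_compl _ (measurableSet_Ioi (a := (0 : ℝ))), compl_Ioi,
    ← setLIntegral_congr Iio_ae_eq_Iic, hneg, hpos, two_mul]

theorem setLIntegral_abs_rpow_neg_of_one_lt {a r : ℝ} (ha : 1 < a) (hr : 0 < r) :
    ∫⁻ x in {x : ℝ | r < |x|}, ENNReal.ofReal (|x| ^ (-a)) =
      ENNReal.ofReal (2 * (r ^ (1 - a) / (a - 1))) := by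
  have habs := lintegral_comp_abs ((Ioi r).indicator fun x => ENNReal.ofReal (x ^ (-a)))
  rw [lintegral_indicator measurableSet_Ioi, Measure.restrict_restrict measurableSet_Ioi,
    inter_eq_left.2 (Ioi_subset_Ioi hr.le), ← ofReal_integral_eq_lintegral_ofReal
      (integrableOn_Ioi_rpow_of_lt (by linarith) hr), integral_Ioi_rpow_of_lt (by linarith) hr,
    ← ENNReal.ofReal_ofNat 2, ← ENNReal.ofReal_mul zero_le_two] at habs
  · rw [← lintegral_indicator (measurableSet_lt measurable_const (by fun_prop))]
    refine Eq.trans ?_ (habs.trans ?_)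
    · rfl
    rw [show -a + 1 = -(a - 1) by ring, show 1 - a = -(a - 1) by ring, div_neg, neg_div, neg_neg]
  · filter_upwards [ae_restrict_mem measurableSet_Ioi] with x hx
    exact Real.rpow_nonneg (hr.trans hx).le _

theorem setLIntegral_abs_rpow_neg_lt_top_of_lt_one {a : ℝ} (ha : a < 1) (r : ℝ) :
    ∫⁻ x in {x : ℝ | |x| < r}, ENNReal.ofReal (|x| ^ (-a)) < ∞ := by
  have hint : IntegrableOn (fun x : ℝ => |x| ^ (-a)) (Metric.ball 0 r) :=
    integrableOn_ball_of_norm_le_rpow (α := a) (C := 1) (by simp) (by simpa using ha)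
      (ae_of_all _ fun x => by simp [abs_of_nonneg (Real.rpow_nonneg (abs_nonneg x) _)])
      (Measurable.aestronglyMeasurable (by fun_prop))
  simpa [Metric.ball, Real.dist_eq] using hint.setLIntegral_lt_top

end RealLine

section RieszKernels

/-- The integral `∫ |x|^(-a) |x - 1|^(-b) dx` over the real line, a Beta integral: the constant in
the composition law of two Riesz kernels. -/
noncomputable def rieszBeta (a b : ℝ) : ℝ≥0∞ :=
  ∫⁻ x : ℝ, ENNReal.ofReal (|x| ^ (-a) * |x - 1| ^ (-b))

theorem lintegral_abs_rpow_mul_abs_sub_rpow (a b : ℝ) {c : ℝ} (hc : c ≠ 0) :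
    ∫⁻ x : ℝ, ENNReal.ofReal (|x| ^ (-a) * |x - c| ^ (-b)) =
      ENNReal.ofReal (|c| ^ (1 - a - b)) * rieszBeta a b := by
  have hc' : 0 < |c| := abs_pos.2 hc
  have hscale (x : ℝ) : ENNReal.ofReal (|c * x| ^ (-a) * |c * x - c| ^ (-b)) =
      ENNReal.ofReal (|c| ^ (-a - b)) * ENNReal.ofReal (|x| ^ (-a) * |x - 1| ^ (-b)) := by
    rw [← ENNReal.ofReal_mul (by positivity), ← mul_sub_one, abs_mul, abs_mul,
      Real.mul_rpow hc'.le (abs_nonneg _), Real.mul_rpow hc'.le (abs_nonneg _),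
      sub_eq_add_neg (-a), Real.rpow_add hc', mul_mul_mul_comm]
  have hsubst := lintegral_comp_mul_left hc fun x => ENNReal.ofReal (|x| ^ (-a) * |x - c| ^ (-b))
  simp only [hscale] at hsubst
  rw [lintegral_const_mul' _ _ ENNReal.ofReal_ne_top] at hsubst
  rw [show 1 - a - b = 1 + (-a - b) by ring, Real.rpow_add hc', Real.rpow_one,
    ENNReal.ofReal_mul hc'.le, mul_assoc, rieszBeta, hsubst, ← mul_assoc,
    ← ENNReal.ofReal_mul hc'.le, mul_inv_cancel₀ hc'.ne', ENNReal.ofReal_one, one_mul]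

theorem setLIntegral_Iic_abs_rpow_mul_abs_sub_one_rpow_lt_top {a b : ℝ} (ha : a < 1)
    (hab : 1 < a + b) :
    ∫⁻ x in Iic (1 / 2 : ℝ), ENNReal.ofReal (|x| ^ (-a) * |x - 1| ^ (-b)) < ∞ := by
  have hball : MeasurableSet {x : ℝ | |x| < 1} := measurableSet_lt (by fun_prop) measurable_const
  have hnear : ∀ x ∈ Iic (1 / 2 : ℝ) ∩ {x | |x| < 1},
      ENNReal.ofReal (|x| ^ (-a) * |x - 1| ^ (-b)) ≤
        ENNReal.ofReal ((1 / 2) ^ (-b)) * ENNReal.ofReal (|x| ^ (-a)) := fun x hx => by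
    have hx1 : 1 / 2 ≤ |x - 1| := by grind
    rw [← ENNReal.ofReal_mul (by positivity), mul_comm]
    gcongr ENNReal.ofReal (?_ * _)
    exact Real.rpow_le_rpow_of_nonpos (by norm_num) hx1 (by linarith)
  have hfar : ∀ x ∈ Iic (1 / 2 : ℝ) \ {x | |x| < 1},
      ENNReal.ofReal (|x| ^ (-a) * |x - 1| ^ (-b)) ≤ ENNReal.ofReal (|x| ^ (-(a + b))) := by
    intro x hx
    have hx0 : 0 < |x| := by grind
    have hx1 : |x| ≤ |x - 1| := by grind
    rw [neg_add, Real.rpow_add hx0]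
    gcongr ENNReal.ofReal (_ * ?_)
    exact Real.rpow_le_rpow_of_nonpos hx0 hx1 (by linarith)
  rw [← lintegral_inter_add_sdiff _ _ hball]
  refine ENNReal.add_lt_top.2 ⟨?_, ?_⟩
  · refine (setLIntegral_mono' (measurableSet_Iic.inter hball) hnear).trans_lt ?_
    rw [lintegral_const_mul' _ _ ENNReal.ofReal_ne_top]
    exact ENNReal.mul_lt_top ENNReal.ofReal_lt_top <|
      (lintegral_mono_set inter_subset_right).trans_lt
        (setLIntegral_abs_rpow_neg_lt_top_of_lt_one ha 1)
  · refine (setLIntegral_mono' (measurableSet_Iic.diff hball) hfar).trans_lt ?_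
    have hsub : Iic (1 / 2 : ℝ) \ {x | |x| < 1} ⊆ {x | 1 / 2 < |x|} := fun x hx => by grind
    refine (lintegral_mono_set hsub).trans_lt ?_
    rw [setLIntegral_abs_rpow_neg_of_one_lt hab one_half_pos]
    exact ENNReal.ofReal_lt_top

theorem rieszBeta_lt_top {a b : ℝ} (ha : a < 1) (hb : b < 1) (hab : 1 < a + b) :
    rieszBeta a b < ∞ := by
  have hreflect : ∫⁻ x in Ioi (1 / 2 : ℝ), ENNReal.ofReal (|x| ^ (-a) * |x - 1| ^ (-b)) =
      ∫⁻ x in Iio (1 / 2), ENNReal.ofReal (|x| ^ (-b) * |x - 1| ^ (-a)) := by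
    have h := (Measure.measurePreserving_sub_left volume (1 : ℝ)).setLIntegral_comp_preimage_emb
      (Homeomorph.subLeft (1 : ℝ)).measurableEmbedding
      (fun x => ENNReal.ofReal (|x| ^ (-b) * |x - 1| ^ (-a))) (Iio (1 / 2))
    rw [← h, preimage_const_sub_Iio, show (1 : ℝ) - 1 / 2 = 1 / 2 by norm_num]
    congr with x
    rw [sub_sub_cancel_left, abs_neg, abs_sub_comm 1 x, mul_comm]
  rw [rieszBeta, ← lintegral_add_compl _ (measurableSet_Iic (a := (1 / 2 : ℝ))), compl_Iic,
    hreflect]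
  refine ENNReal.add_lt_top.2
    ⟨setLIntegral_Iic_abs_rpow_mul_abs_sub_one_rpow_lt_top ha hab, ?_⟩
  exact (lintegral_mono_set Iio_subset_Iic_self).trans_lt
    (setLIntegral_Iic_abs_rpow_mul_abs_sub_one_rpow_lt_top hb (by linarith))

end RieszKernels

section OneDimensional

theorem lintegral_le_of_le_of_mul_sq_le {g : ℝ → ℝ≥0∞} {l m : ℝ≥0∞} (hl : ∀ u, g u ≤ l)
    (hm : ∀ u, g u * ENNReal.ofReal |u| ^ 2 ≤ m) {r : ℝ} (hr : 0 < r) :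
    ∫⁻ u, g u ≤ 2 * ENNReal.ofReal r * l + 2 * ENNReal.ofReal r⁻¹ * m := by
  have hfarset : MeasurableSet {u : ℝ | r < |u|} := measurableSet_lt measurable_const (by fun_prop)
  have hnear : ∫⁻ u in {u : ℝ | r < |u|}ᶜ, g u ≤ 2 * ENNReal.ofReal r * l := calc
    ∫⁻ u in {u : ℝ | r < |u|}ᶜ, g u ≤ ∫⁻ _ in Metric.closedBall (0 : ℝ) r, l := by
      refine lintegral_mono' (Measure.restrict_mono (fun u hu => ?_) le_rfl) hl
      simpa using hu
    _ = 2 * ENNReal.ofReal r * l := by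
      rw [setLIntegral_const, Real.volume_closedBall, ENNReal.ofReal_mul zero_le_two,
        ENNReal.ofReal_ofNat, mul_comm]
  have hfar : ∫⁻ u in {u : ℝ | r < |u|}, g u ≤ 2 * ENNReal.ofReal r⁻¹ * m := calc
    ∫⁻ u in {u : ℝ | r < |u|}, g u
        ≤ ∫⁻ u in {u : ℝ | r < |u|}, ENNReal.ofReal (|u| ^ (-2 : ℝ)) * m := by
      refine setLIntegral_mono' hfarset fun u hu => ?_
      have hu0 : 0 < |u| := hr.trans hu
      rw [Real.rpow_neg hu0.le, ENNReal.ofReal_inv_of_pos (by positivity), Real.rpow_two,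
        ENNReal.ofReal_pow hu0.le, mul_comm, ← div_eq_mul_inv,
        ENNReal.le_div_iff_mul_le (by simp [abs_pos.1 hu0]) (by simp)]
      exact hm u
    _ = 2 * ENNReal.ofReal r⁻¹ * m := by
      rw [lintegral_mul_const _ (by fun_prop), setLIntegral_abs_rpow_neg_of_one_lt one_lt_two hr,
        ENNReal.ofReal_mul zero_le_two, ENNReal.ofReal_ofNat]
      norm_num [Real.rpow_neg_one]
  rw [← lintegral_add_compl g hfarset, add_comm]
  gcongr

theorem lintegral_le_of_le_sq_of_mul_sq_le {g : ℝ → ℝ≥0∞} {l h : ℝ≥0∞} (hl : ∀ u, g u ≤ l ^ 2)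
    (hh : ∀ u, g u * ENNReal.ofReal |u| ^ 2 ≤ h ^ 2) : ∫⁻ u, g u ≤ 4 * (l * h) := by
  rcases eq_or_ne l 0 with rfl | hl0
  · simp_all
  rcases eq_or_ne h 0 with rfl | hh0
  · have hg : g =ᵐ[volume] 0 := by
      filter_upwards [Measure.ae_ne volume (0 : ℝ)] with u hu
      simpa [hu] using hh u
    simp [lintegral_congr_ae hg]
  rcases eq_or_ne l ∞ with rfl | hlt
  · simp [hh0]
  rcases eq_or_ne h ∞ with rfl | hht
  · simp [hl0]
  have hl' : 0 < l.toReal := ENNReal.toReal_pos hl0 hlt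
  have hr : 0 < h.toReal / l.toReal := div_pos (ENNReal.toReal_pos hh0 hht) hl'
  set r : ℝ := h.toReal / l.toReal
  have hlr : h = l * ENNReal.ofReal r := by
    rw [ENNReal.ofReal_div_of_pos hl', ENNReal.ofReal_toReal hht, ENNReal.ofReal_toReal hlt,
      ENNReal.mul_div_cancel hl0 hlt]
  have hr1 : ENNReal.ofReal r⁻¹ * ENNReal.ofReal r = 1 := by
    rw [← ENNReal.ofReal_mul (by positivity), inv_mul_cancel₀ hr.ne', ENNReal.ofReal_one]
  calc ∫⁻ u, g u ≤ 2 * ENNReal.ofReal r * l ^ 2 + 2 * ENNReal.ofReal r⁻¹ * h ^ 2 :=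
        lintegral_le_of_le_of_mul_sq_le hl hh hr
    _ = 2 * l * (l * ENNReal.ofReal r) +
          2 * l * (l * ENNReal.ofReal r) * (ENNReal.ofReal r⁻¹ * ENNReal.ofReal r) := by
        rw [hlr]
        ring
    _ = 4 * (l * h) := by
        rw [hr1, ← hlr]
        ring

theorem sq_lintegral_le_of_le {g : ℝ → ℝ≥0∞} (hg : Measurable g) {l : ℝ≥0∞}
    (hl : ∀ u, g u ≤ l) :
    (∫⁻ u, g u) ^ 2 ≤
      8 * l ^ (1 / 2 : ℝ) * ∫⁻ u, g u ^ (3 / 2 : ℝ) * ENNReal.ofReal |u| := by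
  set f : ℝ → ℝ≥0∞ := fun u => g u * ENNReal.ofReal |u| ^ 2
  have hsq (y : ℝ≥0∞) : (y ^ (1 / 2 : ℝ)) ^ 2 = y := by
    rw [← ENNReal.rpow_natCast, ← ENNReal.rpow_mul]
    norm_num
  have hsublevel (a : ℝ) : ∫⁻ b, {b | f b ≤ f a}.indicator g b ≤
      4 * (l ^ (1 / 2 : ℝ) * (g a ^ (1 / 2 : ℝ) * ENNReal.ofReal |a|)) := by
    refine lintegral_le_of_le_sq_of_mul_sq_le (fun b => ?_) fun b => ?_
    · rw [hsq]
      exact (indicator_le_self _ _ _).trans (hl b)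
    · rw [mul_pow, hsq]
      by_cases hb : f b ≤ f a
      · rwa [indicator_of_mem (show b ∈ {b | f b ≤ f a} from hb)]
      · rw [indicator_of_notMem (show b ∉ {b | f b ≤ f a} from hb), zero_mul]
        exact zero_le
  calc (∫⁻ u, g u) ^ 2
      ≤ 2 ^ 1 * ∫⁻ a, g a * (∫⁻ b, {b | f b ≤ f a}.indicator g b) ^ 1 :=
        lintegral_pow_succ_le hg (by fun_prop) 1
    _ ≤ 2 ^ 1 * ∫⁻ a, g a *
          (4 * (l ^ (1 / 2 : ℝ) * (g a ^ (1 / 2 : ℝ) * ENNReal.ofReal |a|))) ^ 1 := by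
        gcongr with a
        exact hsublevel a
    _ = 2 * ∫⁻ a, 4 * l ^ (1 / 2 : ℝ) * (g a ^ (3 / 2 : ℝ) * ENNReal.ofReal |a|) := by
        rw [pow_one]
        congr with a
        rw [show (3 / 2 : ℝ) = 1 + 1 / 2 by norm_num,
          ENNReal.rpow_add_of_nonneg _ _ zero_le_one (by norm_num), ENNReal.rpow_one]
        ring
    _ = 8 * l ^ (1 / 2 : ℝ) * ∫⁻ u, g u ^ (3 / 2 : ℝ) * ENNReal.ofReal |u| := by
        rw [lintegral_const_mul _ (by fun_prop)]
        ring

end OneDimensional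

section WeightedCauchySchwarz

theorem sq_lintegral_le_lintegral_mul_lintegral_inv_mul_sq {α : Type*} [MeasurableSpace α]
    {μ : Measure α} {g w : α → ℝ≥0∞} (hg : Measurable g) (hw : Measurable w)
    (hne : ∀ᵐ x ∂μ, w x ≠ 0 ∧ w x ≠ ∞) :
    (∫⁻ x, g x ∂μ) ^ 2 ≤ (∫⁻ x, w x ∂μ) * ∫⁻ x, (w x)⁻¹ * g x ^ 2 ∂μ := by
  have hsq (y : ℝ≥0∞) : (y ^ (2⁻¹ : ℝ)) ^ 2 = y := by
    rw [← ENNReal.rpow_natCast, ← ENNReal.rpow_mul]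
    norm_num
  have hfactor : ∫⁻ x, g x ∂μ =
      ∫⁻ x, w x ^ (2⁻¹ : ℝ) * ((w x)⁻¹ * g x ^ 2) ^ (2⁻¹ : ℝ) ∂μ := by
    refine lintegral_congr_ae (hne.mono fun x hx => ?_)
    dsimp only
    rw [← ENNReal.mul_rpow_of_nonneg _ _ (by norm_num), ← mul_assoc,
      ENNReal.mul_inv_cancel hx.1 hx.2, one_mul, ← ENNReal.rpow_natCast, ← ENNReal.rpow_mul]
    norm_num
  calc (∫⁻ x, g x ∂μ) ^ 2
      ≤ ((∫⁻ x, w x ∂μ) ^ (2⁻¹ : ℝ) * (∫⁻ x, (w x)⁻¹ * g x ^ 2 ∂μ) ^ (2⁻¹ : ℝ)) ^ 2 := by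
        rw [hfactor]
        gcongr
        exact ENNReal.lintegral_mul_norm_pow_le (by fun_prop) (by fun_prop) (by norm_num)
          (by norm_num) (by norm_num)
    _ = (∫⁻ x, w x ∂μ) * ∫⁻ x, (w x)⁻¹ * g x ^ 2 ∂μ := by rw [mul_pow, hsq, hsq]

theorem lintegral_lintegral_sq_lintegral_le_of_weight {α β γ : Type*} [MeasurableSpace α]
    [MeasurableSpace β] [MeasurableSpace γ] {μ : Measure α} {ν : Measure β} {κ : Measure γ}
    [SFinite μ] [SFinite ν] [SFinite κ] {A : α → β → γ → ℝ≥0∞}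
    (hA : Measurable fun p : α × β × γ => A p.1 p.2.1 p.2.2) {w : β → γ → ℝ≥0∞}
    (hw : Measurable (uncurry w)) (hne : ∀ᵐ y ∂ν, ∀ᵐ z ∂κ, w y z ≠ 0 ∧ w y z ≠ ∞) {K : ℝ≥0∞}
    (hK : ∀ᵐ y ∂ν, ∫⁻ z, w y z ∂κ ≤ K) :
    ∫⁻ x, ∫⁻ y, (∫⁻ z, A x y z ∂κ) ^ 2 ∂ν ∂μ ≤
      K * ∫⁻ y, ∫⁻ z, (w y z)⁻¹ * ∫⁻ x, A x y z ^ 2 ∂μ ∂κ ∂ν := calc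
  ∫⁻ x, ∫⁻ y, (∫⁻ z, A x y z ∂κ) ^ 2 ∂ν ∂μ
      ≤ ∫⁻ x, ∫⁻ y, K * ∫⁻ z, (w y z)⁻¹ * A x y z ^ 2 ∂κ ∂ν ∂μ := by
    refine lintegral_mono fun x => lintegral_mono_ae ?_
    filter_upwards [hne, hK] with y hy hKy
    refine (sq_lintegral_le_lintegral_mul_lintegral_inv_mul_sq (by fun_prop) (by fun_prop)
      hy).trans ?_
    gcongr
  _ = K * ∫⁻ y, ∫⁻ x, ∫⁻ z, (w y z)⁻¹ * A x y z ^ 2 ∂κ ∂μ ∂ν := by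
    rw [lintegral_lintegral_swap (by fun_prop), ← lintegral_const_mul _ (by fun_prop)]
    congr with y
    rw [lintegral_const_mul _ (by fun_prop)]
  _ = K * ∫⁻ y, ∫⁻ z, (w y z)⁻¹ * ∫⁻ x, A x y z ^ 2 ∂μ ∂κ ∂ν := by
    congr with y
    rw [lintegral_lintegral_swap (by fun_prop)]
    congr with z
    rw [lintegral_const_mul _ (by fun_prop)]

end WeightedCauchySchwarz

section Parabola

theorem lintegral_prod_comp_add {Φ : ℝ × ℝ → ℝ≥0∞} (hΦ : Measurable Φ) (q : ℝ → ℝ) :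
    ∫⁻ t, Φ t = ∫⁻ τ, ∫⁻ σ, Φ (τ, σ + q τ) := by
  rw [Measure.volume_eq_prod, lintegral_prod _ hΦ.aemeasurable]
  congr with τ
  rw [lintegral_add_right_eq_self fun y => Φ (τ, y)]

theorem lintegral_prod_comp_sub_add {Φ : ℝ × ℝ → ℝ≥0∞} (hΦ : Measurable Φ) {q : ℝ → ℝ}
    (hq : Measurable q) (τ : ℝ) :
    ∫⁻ t, Φ t = ∫⁻ s, ∫⁻ u, Φ (τ - u, s + q (τ - u)) := by
  rw [lintegral_prod_comp_add hΦ q, ← lintegral_sub_left_eq_self _ τ,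
    lintegral_lintegral_swap (by fun_prop)]

theorem lintegral_prod_prod_eq {h : ℝ × ℝ × ℝ → ℝ≥0∞} (hh : Measurable h) :
    ∫⁻ x, h x = ∫⁻ z, ∫⁻ y : ℝ × ℝ, h (y.1, y.2, z) := by
  calc ∫⁻ x, h x = ∫⁻ u, ∫⁻ z, ∫⁻ v, h (u, v, z) := by
        rw [Measure.volume_eq_prod, lintegral_prod _ hh.aemeasurable]
        congr with u
        rw [Measure.volume_eq_prod, lintegral_prod_symm _ (by fun_prop)]
    _ = ∫⁻ z, ∫⁻ u, ∫⁻ v, h (u, v, z) := lintegral_lintegral_swap (by fun_prop)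
    _ = ∫⁻ z, ∫⁻ y : ℝ × ℝ, h (y.1, y.2, z) := by
        congr with z
        rw [Measure.volume_eq_prod, lintegral_prod _ (by fun_prop)]

theorem lintegral_sq_lintegral_mul_add_le {g : ℝ × ℝ → ℝ≥0∞} (hg : Measurable g) {l : ℝ≥0∞}
    (hl : ∀ x, g x ≤ l) {c : ℝ} (hc : c ≠ 0) {d : ℝ → ℝ} (hd : Measurable d) :
    ∫⁻ τ, (∫⁻ u, g (u, c * u * τ + d u)) ^ 2 ≤
      ENNReal.ofReal |c|⁻¹ * (8 * l ^ (1 / 2 : ℝ) * ∫⁻ x, g x ^ (3 / 2 : ℝ)) := by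
  set h : ℝ × ℝ → ℝ≥0∞ := fun x => g x ^ (3 / 2 : ℝ)
  have hline {u : ℝ} (hu : u ≠ 0) : ∫⁻ τ, h (u, c * u * τ + d u) * ENNReal.ofReal |u| =
      ENNReal.ofReal |c|⁻¹ * ∫⁻ x, h (u, x) := by
    rw [lintegral_mul_const _ (by fun_prop),
      lintegral_comp_mul_left (mul_ne_zero hc hu) fun x => h (u, x + d u),
      lintegral_add_right_eq_self fun x => h (u, x), mul_right_comm,
      ← ENNReal.ofReal_mul (by positivity), abs_mul, mul_inv,
      inv_mul_cancel_right₀ (abs_ne_zero.2 hu)]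
  calc ∫⁻ τ, (∫⁻ u, g (u, c * u * τ + d u)) ^ 2
      ≤ ∫⁻ τ, 8 * l ^ (1 / 2 : ℝ) * ∫⁻ u, h (u, c * u * τ + d u) * ENNReal.ofReal |u| :=
        lintegral_mono fun τ => sq_lintegral_le_of_le (by fun_prop) fun u => hl _
    _ = 8 * l ^ (1 / 2 : ℝ) * ∫⁻ u, ∫⁻ τ, h (u, c * u * τ + d u) * ENNReal.ofReal |u| := by
        rw [lintegral_const_mul _ (by fun_prop), lintegral_lintegral_swap (by fun_prop)]
    _ = 8 * l ^ (1 / 2 : ℝ) * ∫⁻ u, ENNReal.ofReal |c|⁻¹ * ∫⁻ x, h (u, x) := by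
        congr 1
        refine lintegral_congr_ae ?_
        filter_upwards [Measure.ae_ne volume (0 : ℝ)] with u hu using hline hu
    _ = ENNReal.ofReal |c|⁻¹ * (8 * l ^ (1 / 2 : ℝ) * ∫⁻ x, h x) := by
        rw [lintegral_const_mul _ (by fun_prop), Measure.volume_eq_prod,
          lintegral_prod _ (by fun_prop)]
        ring

/-- `w` is a weight, with constants `K₁` and `K₂`, for the differences `ψ σ - ψ s`: the weight is
integrable in `s` uniformly in `σ`, while its reciprocal is so small that integrating a function of
`ψ σ - ψ s` against it costs no more than the one-dimensional integral of that function. -/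
structure IsDifferenceWeight (ψ : ℝ → ℝ) (w : ℝ → ℝ → ℝ≥0∞) (K₁ K₂ : ℝ≥0∞) : Prop where
  measurable : Measurable (uncurry w)
  ae_ne : ∀ᵐ σ, ∀ᵐ s, w σ s ≠ 0 ∧ w σ s ≠ ∞
  lintegral_le : ∀ᵐ σ, ∫⁻ s, w σ s ≤ K₁
  lintegral_inv_mul_le : ∀ H : ℝ → ℝ≥0∞, Measurable H →
    ∫⁻ σ, ∫⁻ s, (w σ s)⁻¹ * H (ψ σ - ψ s) ≤ K₂ * ∫⁻ z, H z

/-- The parametrization `(t₁, t₂) ↦ (t₁, t₂, φ(t))` of the graph of `φ`, whose translates are the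
surfaces over which `avgOp φ` averages. -/
def graphMap (φ : ℝ × ℝ → ℝ) (t : ℝ × ℝ) : ℝ × ℝ × ℝ := (t.1, t.2, φ t)

theorem measurable_graphMap {φ : ℝ × ℝ → ℝ} (hφ : Measurable φ) : Measurable (graphMap φ) :=
  measurable_fst.prodMk (measurable_snd.prodMk hφ)

theorem avgOp_univ_eq_lintegral_sub_graphMap (φ : ℝ × ℝ → ℝ) (f : ℝ × ℝ × ℝ → ℝ≥0∞)
    (x : ℝ × ℝ × ℝ) : avgOp φ univ f x = ∫⁻ t, f (x - graphMap φ t) := by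
  rw [avgOp, Measure.restrict_univ]
  rfl

theorem lintegral_graphMap_sub {ψ : ℝ → ℝ} (hψ : Measurable ψ) {g : ℝ × ℝ × ℝ → ℝ≥0∞}
    (hg : Measurable g) (τ σ : ℝ) :
    ∫⁻ s, g (graphMap (fun t => ψ (t.2 - t.1 ^ 2)) (τ, σ + τ ^ 2) -
        graphMap (fun t => ψ (t.2 - t.1 ^ 2)) s) =
      ∫⁻ s, ∫⁻ u, g (u, 2 * u * τ + (σ - s - u ^ 2), ψ σ - ψ s) := by
  have hγ : Measurable (graphMap fun t => ψ (t.2 - t.1 ^ 2)) := measurable_graphMap (by fun_prop)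
  rw [lintegral_prod_comp_sub_add (q := fun x => x ^ 2) (by fun_prop) (by fun_prop) τ]
  congr with s
  congr with u
  congr 1
  ext <;> simp only [graphMap, Prod.fst_sub, Prod.snd_sub] <;> ring_nf

theorem IsDifferenceWeight.lintegral_sq_lintegral_graphMap_sub_le {ψ : ℝ → ℝ} (hψ : Measurable ψ)
    {w : ℝ → ℝ → ℝ≥0∞} {K₁ K₂ : ℝ≥0∞} (hw : IsDifferenceWeight ψ w K₁ K₂)
    {g : ℝ × ℝ × ℝ → ℝ≥0∞} (hg : Measurable g) {l : ℝ≥0∞} (hl : ∀ x, g x ≤ l) :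
    ∫⁻ t, (∫⁻ s, g (graphMap (fun t => ψ (t.2 - t.1 ^ 2)) t -
        graphMap (fun t => ψ (t.2 - t.1 ^ 2)) s)) ^ 2 ≤
      4 * K₁ * K₂ * l ^ (1 / 2 : ℝ) * ∫⁻ x, g x ^ (3 / 2 : ℝ) := by
  set γ : ℝ × ℝ → ℝ × ℝ × ℝ := graphMap fun t => ψ (t.2 - t.1 ^ 2)
  have hγ : Measurable γ := measurable_graphMap (by fun_prop)
  set A : ℝ → ℝ → ℝ → ℝ≥0∞ := fun τ σ s =>
    ∫⁻ u, g (u, 2 * u * τ + (σ - s - u ^ 2), ψ σ - ψ s)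
  have hA : Measurable fun p : ℝ × ℝ × ℝ => A p.1 p.2.1 p.2.2 := by fun_prop
  set H : ℝ → ℝ≥0∞ := fun z => ∫⁻ y : ℝ × ℝ, g (y.1, y.2, z) ^ (3 / 2 : ℝ)
  have hH : Measurable H := by fun_prop
  have hAH (σ s : ℝ) : ∫⁻ τ, A τ σ s ^ 2 ≤ 4 * l ^ (1 / 2 : ℝ) * H (ψ σ - ψ s) := by
    refine (lintegral_sq_lintegral_mul_add_le (g := fun y => g (y.1, y.2, ψ σ - ψ s))
      (by fun_prop) (fun _ => hl _) two_ne_zero (by fun_prop)).trans_eq ?_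
    rw [abs_two, ← ENNReal.ofReal_ofNat 8, mul_assoc, ← mul_assoc,
      ← ENNReal.ofReal_mul (by norm_num), mul_assoc]
    norm_num [H]
  calc ∫⁻ t, (∫⁻ s, g (γ t - γ s)) ^ 2 = ∫⁻ τ, ∫⁻ σ, (∫⁻ s, A τ σ s) ^ 2 := by
        rw [lintegral_prod_comp_add (by fun_prop) fun x => x ^ 2]
        simp only [γ, lintegral_graphMap_sub hψ hg, A]
    _ ≤ K₁ * ∫⁻ σ, ∫⁻ s, (w σ s)⁻¹ * ∫⁻ τ, A τ σ s ^ 2 :=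
        lintegral_lintegral_sq_lintegral_le_of_weight hA hw.measurable hw.ae_ne hw.lintegral_le
    _ ≤ K₁ * ∫⁻ σ, ∫⁻ s, (w σ s)⁻¹ * (4 * l ^ (1 / 2 : ℝ) * H (ψ σ - ψ s)) := by
        gcongr with σ s
        exact hAH σ s
    _ ≤ K₁ * (K₂ * ∫⁻ z, 4 * l ^ (1 / 2 : ℝ) * H z) := by
        gcongr
        exact hw.lintegral_inv_mul_le (fun z => 4 * l ^ (1 / 2 : ℝ) * H z) (by fun_prop)
    _ = 4 * K₁ * K₂ * l ^ (1 / 2 : ℝ) * ∫⁻ x, g x ^ (3 / 2 : ℝ) := by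
        rw [lintegral_const_mul _ hH, lintegral_prod_prod_eq (by fun_prop)]
        ring

theorem IsDifferenceWeight.lintegral_pow_three_avgOp_le {ψ : ℝ → ℝ} (hψ : Measurable ψ)
    {w : ℝ → ℝ → ℝ≥0∞} {K₁ K₂ : ℝ≥0∞} (hw : IsDifferenceWeight ψ w K₁ K₂)
    {f : ℝ × ℝ × ℝ → ℝ≥0∞} (hf : Measurable f) :
    ∫⁻ x, avgOp (fun t => ψ (t.2 - t.1 ^ 2)) univ f x ^ 3 ≤
      16 * K₁ * K₂ * (∫⁻ x, f x ^ (3 / 2 : ℝ)) ^ 2 := by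
  have : (volume : Measure (ℝ × ℝ × ℝ)).IsAddLeftInvariant := Measure.prod.instIsAddLeftInvariant
  simp only [avgOp_univ_eq_lintegral_sub_graphMap]
  refine (lintegral_pow_succ_lintegral_sub_le (n := 2) (a := 1 / 2) (b := 3 / 2)
    (measurable_graphMap (by fun_prop)) (by norm_num) (by norm_num) (fun g l hg hl =>
      hw.lintegral_sq_lintegral_graphMap_sub_le hψ hg hl) hf).trans_eq ?_
  norm_num
  ring

end Parabola

section CubeWeight

theorem lintegral_comp_cube (Φ : ℝ → ℝ≥0∞) :
    ∫⁻ x, Φ (x ^ 3) = 3⁻¹ * ∫⁻ y, ENNReal.ofReal (|y| ^ (-(2 / 3) : ℝ)) * Φ y := by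
  rw [lintegral_comp_pow_of_odd (n := 3) (by decide), Nat.cast_ofNat,
    ENNReal.ofReal_inv_of_pos three_pos, ENNReal.ofReal_ofNat,
    show (3⁻¹ - 1 : ℝ) = -(2 / 3) by norm_num]

/-- The weight for differences of cubes in the variables `p = σ ^ 3` and `q = s ^ 3`. The exponent
`-1/3` of `|q - p|` and the opposite exponents `1/6` and `-1/6` of `|p|` and `|q|` make both
integrals in `IsDifferenceWeight` scale invariant; any number strictly between `0` and `1/3` could
replace `1/6`. -/
noncomputable def cubeKernel (p q : ℝ) : ℝ≥0∞ :=
  ENNReal.ofReal (|p| ^ (1 / 6 : ℝ) * (|q| ^ (-(1 / 6) : ℝ) * |q - p| ^ (-(1 / 3) : ℝ)))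

theorem measurable_uncurry_cubeKernel : Measurable (uncurry cubeKernel) := by
  simp only [uncurry_def, cubeKernel]
  fun_prop

theorem cubeKernel_ne_zero {p q : ℝ} (hp : p ≠ 0) (hq : q ≠ 0) (hpq : p ≠ q) :
    cubeKernel p q ≠ 0 := by
  have hp' : 0 < |p| := abs_pos.2 hp
  have hq' : 0 < |q| := abs_pos.2 hq
  have hqp : 0 < |q - p| := abs_pos.2 (sub_ne_zero.2 hpq.symm)
  exact (ENNReal.ofReal_pos.2 <| mul_pos (Real.rpow_pos_of_pos hp' _) <|
    mul_pos (Real.rpow_pos_of_pos hq' _) (Real.rpow_pos_of_pos hqp _)).ne'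

theorem lintegral_cubeKernel {p : ℝ} (hp : p ≠ 0) :
    ∫⁻ q, ENNReal.ofReal (|q| ^ (-(2 / 3) : ℝ)) * cubeKernel p q = rieszBeta (5 / 6) (1 / 3) := by
  have hp' : 0 < |p| := abs_pos.2 hp
  have hkernel (q : ℝ) : ENNReal.ofReal (|q| ^ (-(2 / 3) : ℝ)) * cubeKernel p q =
      ENNReal.ofReal (|p| ^ (1 / 6 : ℝ)) *
        ENNReal.ofReal (|q| ^ (-(5 / 6) : ℝ) * |q - p| ^ (-(1 / 3) : ℝ)) := by
    rw [cubeKernel, ← ENNReal.ofReal_mul (by positivity), ← ENNReal.ofReal_mul (by positivity),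
      show (-(5 / 6) : ℝ) = -(2 / 3) + -(1 / 6) by norm_num,
      Real.rpow_add' (abs_nonneg q) (by norm_num)]
    ring_nf
  simp only [hkernel]
  rw [lintegral_const_mul' _ _ ENNReal.ofReal_ne_top, lintegral_abs_rpow_mul_abs_sub_rpow _ _ hp,
    ← mul_assoc, ← ENNReal.ofReal_mul (by positivity), ← Real.rpow_add hp']
  norm_num

theorem lintegral_inv_cubeKernel_sub {z : ℝ} (hz : z ≠ 0) :
    ∫⁻ p, ENNReal.ofReal (|p| ^ (-(2 / 3) : ℝ)) *
        (ENNReal.ofReal (|p - z| ^ (-(2 / 3) : ℝ)) * (cubeKernel p (p - z))⁻¹) =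
      rieszBeta (5 / 6) (1 / 2) := by
  have hz' : 0 < |z| := abs_pos.2 hz
  have hkernel {p : ℝ} (hp : p ≠ 0) (hpz : p ≠ z) : ENNReal.ofReal (|p| ^ (-(2 / 3) : ℝ)) *
        (ENNReal.ofReal (|p - z| ^ (-(2 / 3) : ℝ)) * (cubeKernel p (p - z))⁻¹) =
      ENNReal.ofReal (|z| ^ (1 / 3 : ℝ)) *
        ENNReal.ofReal (|p| ^ (-(5 / 6) : ℝ) * |p - z| ^ (-(1 / 2) : ℝ)) := by
    have hp' : 0 < |p| := abs_pos.2 hp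
    have hpz' : 0 < |p - z| := abs_pos.2 (sub_ne_zero.2 hpz)
    rw [cubeKernel, sub_sub_cancel_left, abs_neg, ← ENNReal.ofReal_inv_of_pos (by positivity),
      ← ENNReal.ofReal_mul (by positivity), ← ENNReal.ofReal_mul (by positivity),
      ← ENNReal.ofReal_mul (by positivity), mul_inv, mul_inv, ← Real.rpow_neg hp'.le,
      ← Real.rpow_neg hpz'.le, ← Real.rpow_neg hz'.le, neg_neg, neg_neg,
      show (-(5 / 6) : ℝ) = -(2 / 3) + -(1 / 6) by norm_num,
      show (-(1 / 2) : ℝ) = -(2 / 3) + 1 / 6 by norm_num, Real.rpow_add hp', Real.rpow_add hpz']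
    ring_nf
  have hae : ∀ᵐ p, ENNReal.ofReal (|p| ^ (-(2 / 3) : ℝ)) *
        (ENNReal.ofReal (|p - z| ^ (-(2 / 3) : ℝ)) * (cubeKernel p (p - z))⁻¹) =
      ENNReal.ofReal (|z| ^ (1 / 3 : ℝ)) *
        ENNReal.ofReal (|p| ^ (-(5 / 6) : ℝ) * |p - z| ^ (-(1 / 2) : ℝ)) := by
    filter_upwards [Measure.ae_ne volume (0 : ℝ), Measure.ae_ne volume z] with p using hkernel
  rw [lintegral_congr_ae hae, lintegral_const_mul' _ _ ENNReal.ofReal_ne_top,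
    lintegral_abs_rpow_mul_abs_sub_rpow _ _ hz, ← mul_assoc, ← ENNReal.ofReal_mul (by positivity),
    ← Real.rpow_add hz']
  norm_num

theorem lintegral_lintegral_inv_cubeKernel_mul {H : ℝ → ℝ≥0∞} (hH : Measurable H) :
    ∫⁻ σ : ℝ, ∫⁻ s : ℝ, (cubeKernel (σ ^ 3) (s ^ 3))⁻¹ * H (σ ^ 3 - s ^ 3) =
      9⁻¹ * rieszBeta (5 / 6) (1 / 2) * ∫⁻ z, H z := by
  set V : ℝ → ℝ → ℝ≥0∞ := fun p q => ENNReal.ofReal (|p| ^ (-(2 / 3) : ℝ)) *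
    (ENNReal.ofReal (|q| ^ (-(2 / 3) : ℝ)) * (cubeKernel p q)⁻¹)
  have hk := measurable_uncurry_cubeKernel
  have hV : Measurable (uncurry V) := by fun_prop
  calc ∫⁻ σ : ℝ, ∫⁻ s : ℝ, (cubeKernel (σ ^ 3) (s ^ 3))⁻¹ * H (σ ^ 3 - s ^ 3)
      = 3⁻¹ * ∫⁻ p : ℝ, ENNReal.ofReal (|p| ^ (-(2 / 3) : ℝ)) *
          ∫⁻ s : ℝ, (cubeKernel p (s ^ 3))⁻¹ * H (p - s ^ 3) :=
        lintegral_comp_cube fun p => ∫⁻ s : ℝ, (cubeKernel p (s ^ 3))⁻¹ * H (p - s ^ 3)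
    _ = 3⁻¹ * (3⁻¹ * ∫⁻ p, ∫⁻ q, V p q * H (p - q)) := by
        rw [← lintegral_const_mul (3⁻¹ : ℝ≥0∞) (f := fun p => ∫⁻ q, V p q * H (p - q))
          (by fun_prop)]
        congr 1
        refine lintegral_congr fun p => ?_
        rw [lintegral_comp_cube fun q => (cubeKernel p q)⁻¹ * H (p - q), mul_left_comm,
          ← lintegral_const_mul' _ _ ENNReal.ofReal_ne_top]
        simp only [V, mul_assoc]
    _ = 3⁻¹ * (3⁻¹ * ∫⁻ z, rieszBeta (5 / 6) (1 / 2) * H z) := by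
        rw [lintegral_lintegral_mul_comp_sub hV hH]
        congr 2
        refine lintegral_congr_ae ?_
        filter_upwards [Measure.ae_ne volume (0 : ℝ)] with z hz
        rw [lintegral_inv_cubeKernel_sub hz]
    _ = 9⁻¹ * rieszBeta (5 / 6) (1 / 2) * ∫⁻ z, H z := by
        rw [lintegral_const_mul _ hH, ← mul_assoc, ← mul_assoc, ← ENNReal.mul_inv (by simp)
          (by simp)]
        norm_num

theorem isDifferenceWeight_cubeKernel :
    IsDifferenceWeight (fun x => x ^ 3) (fun σ s => cubeKernel (σ ^ 3) (s ^ 3))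
      (3⁻¹ * rieszBeta (5 / 6) (1 / 3)) (9⁻¹ * rieszBeta (5 / 6) (1 / 2)) where
  measurable := by
    have hk := measurable_uncurry_cubeKernel
    fun_prop
  ae_ne := by
    filter_upwards [Measure.ae_ne volume (0 : ℝ)] with σ hσ
    filter_upwards [Measure.ae_ne volume (0 : ℝ), Measure.ae_ne volume σ] with s hs hsσ
    have hcube : Injective fun x : ℝ => x ^ 3 := (Odd.strictMono_pow (by decide)).injective
    exact ⟨cubeKernel_ne_zero (pow_ne_zero 3 hσ) (pow_ne_zero 3 hs) (hcube.ne hsσ.symm),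
      ENNReal.ofReal_ne_top⟩
  lintegral_le := by
    filter_upwards [Measure.ae_ne volume (0 : ℝ)] with σ hσ
    rw [lintegral_comp_cube, lintegral_cubeKernel (pow_ne_zero 3 hσ)]
  lintegral_inv_mul_le _ hH := (lintegral_lintegral_inv_cubeKernel_mul hH).le

end CubeWeight

/-- The averaging operator associated to φ(t) = (t₂ − t₁²)³ over all of ℝ² maps
L^{3/2}(ℝ³) boundedly into L³(ℝ³) (on nonnegative measurable functions). -/
theorem stmt_18 :
    ∃ C : ℝ, 0 ≤ C ∧ ∀ f : ℝ × ℝ × ℝ → ℝ≥0∞, Measurable f →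
      (∫⁻ x, (avgOp (fun t => (t.2 - t.1 ^ 2) ^ 3) Set.univ f x) ^ (3 : ℝ)) ^ ((3 : ℝ)⁻¹)
        ≤ ENNReal.ofReal C * (∫⁻ x, f x ^ ((3 : ℝ) / 2)) ^ (((3 : ℝ) / 2)⁻¹) := by
  have hβ₁ : rieszBeta (5 / 6) (1 / 3) < ∞ :=
    rieszBeta_lt_top (by norm_num) (by norm_num) (by norm_num)
  have hβ₂ : rieszBeta (5 / 6) (1 / 2) < ∞ :=
    rieszBeta_lt_top (by norm_num) (by norm_num) (by norm_num)
  set K := 16 * (3⁻¹ * rieszBeta (5 / 6) (1 / 3)) * (9⁻¹ * rieszBeta (5 / 6) (1 / 2))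
  have hK : K ≠ ∞ := by finiteness
  refine ⟨(K ^ (3 : ℝ)⁻¹).toReal, ENNReal.toReal_nonneg, fun f hf => ?_⟩
  rw [ENNReal.ofReal_toReal (ENNReal.rpow_ne_top_of_nonneg (by norm_num) hK)]
  simp only [ENNReal.rpow_ofNat]
  calc (∫⁻ x, avgOp (fun t => (t.2 - t.1 ^ 2) ^ 3) univ f x ^ 3) ^ (3 : ℝ)⁻¹
      ≤ (K * (∫⁻ x, f x ^ (3 / 2 : ℝ)) ^ 2) ^ (3 : ℝ)⁻¹ := by
        gcongr
        exact isDifferenceWeight_cubeKernel.lintegral_pow_three_avgOp_le (by fun_prop) hf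
    _ = K ^ (3 : ℝ)⁻¹ * (∫⁻ x, f x ^ (3 / 2 : ℝ)) ^ (3 / 2 : ℝ)⁻¹ := by
        rw [ENNReal.mul_rpow_of_nonneg _ _ (by norm_num), ← ENNReal.rpow_ofNat,
          ← ENNReal.rpow_mul]
        norm_num
end

section
/- Let S ≥ 3 be an integer, let ε ∈ {−1, +1}, and let φ(t₁,t₂) = t₁² + ε t₂^S. Define T f(x) := ∫_{ℝ²} f(x₁ − t₁, x₂ − t₂, x₃ − φ(t₁,t₂)) dt₁ dt₂ for x ∈ ℝ³. Then there is a constant C < ∞ (depending only on S) such that ⟨T χ_E, χ_F⟩ ≤ C |E|^{(2S+2)/(3S+2)} |F|^{(2S+2)/(3S+2)} for all Lebesgue measurable E, F ⊆ ℝ³ of finite measure; that is, T is of restricted weak type (p,q) with 1/p = (2S+2)/(3S+2) and 1/q = S/(3S+2). -/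
open MeasureTheory MvPolynomial
open scoped ENNReal

/-!
Write `φ t = t.1 ^ 2 + γ t.2`, where `|γ''(b)|` is at least a multiple of `|b|^(S-2)`, and let `A`
be the set of `t ∈ R` with `x - (t, φ t) ∈ E`, so that `T_R χ_E x = |A|`. Up to constants, on the
strip `|t.2| ≤ L` the cube `|A|³` is at most `L ∫∫_{A×A} |t.1 - s.1|`, and on either half of
`|t.2| > L` the fourth power `|A|⁴` is at most `L^(2-S) ∫∫∫_{A×A×A} |Δ|`, where `Δ` is the area of
the triangle with vertices `(tᵢ.1, γ'(tᵢ.2))`. Both weights are Jacobians of differences of `φ`, so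
integrating in `x` and changing variables bounds `‖T_R χ_E‖₃³` by `L² |E|²` and `‖T_R χ_E‖₄⁴` by
`L^(2-S) |E|³`. Hölder's inequality turns these into bounds for `⟨T_R χ_E, χ_F⟩`, and the two
balance at `L^(3S+2) = |E| |F|`.
-/

open Polynomial
open scoped NNReal

section ChangeOfVariables

theorem injOn_of_forall_hasDerivAt_ne_zero {f f' : ℝ → ℝ} {s : Set ℝ} (hs : s.OrdConnected)
    (hf : ∀ x ∈ s, HasDerivAt f (f' x) x) (hf' : ∀ x ∈ s, f' x ≠ 0) : Set.InjOn f s := by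
  intro a ha b hb hab
  by_contra hne
  wlog hlt : a < b generalizing a b
  · exact this hb ha hab.symm (Ne.symm hne) (lt_of_le_of_ne (not_lt.1 hlt) (Ne.symm hne))
  obtain ⟨c, hc, hc0⟩ := exists_hasDerivAt_eq_zero hlt
    (fun x hx => (hf x (hs.out ha hb hx)).continuousAt.continuousWithinAt) hab
    (fun x hx => hf x (hs.out ha hb (Set.Ioo_subset_Icc_self hx)))
  exact hf' c (hs.out ha hb (Set.Ioo_subset_Icc_self hc)) hc0

theorem setLIntegral_abs_deriv_mul_comp_le_of_ne_zero {f f' : ℝ → ℝ} {s : Set ℝ}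
    (hs : s.OrdConnected) (hf : ∀ x ∈ s, HasDerivAt f (f' x) x) (hf' : ∀ x ∈ s, f' x ≠ 0)
    (g : ℝ → ℝ≥0∞) :
    ∫⁻ x in s, ENNReal.ofReal |f' x| * g (f x) ≤ ∫⁻ y, g y := by
  rw [← lintegral_image_eq_lintegral_abs_deriv_mul hs.measurableSet
    (fun x hx => (hf x hx).hasDerivWithinAt) (injOn_of_forall_hasDerivAt_ne_zero hs hf hf')]
  exact setLIntegral_le_lintegral _ _

theorem setLIntegral_abs_deriv_mul_comp_le {f f' : ℝ → ℝ} (Z : Finset ℝ) {s : Set ℝ}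
    (hs : s.OrdConnected) (hf : ∀ x ∈ s, HasDerivAt f (f' x) x)
    (hZ : ∀ x ∈ s, f' x = 0 → x ∈ Z) (g : ℝ → ℝ≥0∞) :
    ∫⁻ x in s, ENNReal.ofReal |f' x| * g (f x) ≤ (Z.card + 1) * ∫⁻ y, g y := by
  induction Z using Finset.induction_on_max generalizing s with
  | empty =>
    simpa using setLIntegral_abs_deriv_mul_comp_le_of_ne_zero hs hf
      (fun x hx h0 => Finset.notMem_empty x (hZ x hx h0)) g
  | insert z Z hz ih =>
    have hleft := ih (hs.inter Set.ordConnected_Iio) (fun x hx => hf x hx.1) (fun x hx h0 =>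
      (Finset.mem_insert.1 (hZ x hx.1 h0)).resolve_left (ne_of_lt hx.2))
    have hright := setLIntegral_abs_deriv_mul_comp_le_of_ne_zero
      (hs.inter (Set.ordConnected_Ioi (a := z))) (fun x hx => hf x hx.1) (fun x hx h0 => by
        rcases Finset.mem_insert.1 (hZ x hx.1 h0) with hxz | hxZ
        · exact (ne_of_gt hx.2) hxz
        · exact lt_asymm hx.2 (hz x hxZ)) g
    have hcover : s ⊆ s ∩ Set.Iio z ∪ (s ∩ Set.Ioi z ∪ {z}) := by
      intro x hx
      rcases lt_trichotomy x z with h | h | h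
      · exact Or.inl ⟨hx, h⟩
      · exact Or.inr (Or.inr h)
      · exact Or.inr (Or.inl ⟨hx, h⟩)
    calc ∫⁻ x in s, ENNReal.ofReal |f' x| * g (f x)
        ≤ ∫⁻ x in s ∩ Set.Iio z ∪ (s ∩ Set.Ioi z ∪ {z}), ENNReal.ofReal |f' x| * g (f x) :=
          lintegral_mono_set hcover
      _ ≤ (∫⁻ x in s ∩ Set.Iio z, ENNReal.ofReal |f' x| * g (f x)) +
          ((∫⁻ x in s ∩ Set.Ioi z, ENNReal.ofReal |f' x| * g (f x)) +
            ∫⁻ x in {z}, ENNReal.ofReal |f' x| * g (f x)) :=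
          (lintegral_union_le _ _ _).trans (add_le_add le_rfl (lintegral_union_le _ _ _))
      _ ≤ (Z.card + 1) * (∫⁻ y, g y) + ((∫⁻ y, g y) + 0) := by
          gcongr
          simp
      _ = ((insert z Z).card + 1) * ∫⁻ y, g y := by
          rw [Finset.card_insert_of_notMem fun h => lt_irrefl z (hz z h)]
          push_cast
          ring

-- `p` is monotone between consecutive critical points, of which there are fewer than `natDegree p`.
theorem lintegral_abs_derivative_mul_comp_le (p : ℝ[X]) (g : ℝ → ℝ≥0∞) :
    ∫⁻ x, ENNReal.ofReal |p.derivative.eval x| * g (p.eval x) ≤ p.natDegree * ∫⁻ y, g y := by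
  by_cases h0 : p.derivative = 0
  · simp [h0]
  have hcard : p.derivative.roots.toFinset.card + 1 ≤ p.natDegree := by
    have hroots := (Multiset.toFinset_card_le _).trans (card_roots' p.derivative)
    have hdeg : p.natDegree ≠ 0 := fun h => h0 (derivative_of_natDegree_zero h)
    have := natDegree_derivative_lt hdeg
    omega
  have h := setLIntegral_abs_deriv_mul_comp_le p.derivative.roots.toFinset Set.ordConnected_univ
    (fun x _ => p.hasDerivAt x) (fun x _ hx => by simpa [h0] using hx) g
  rw [setLIntegral_univ] at h
  refine h.trans ?_
  gcongr
  exact_mod_cast hcard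

theorem ofReal_abs_mul_lintegral_comp_mul_add {a : ℝ} (ha : a ≠ 0) (b : ℝ) (g : ℝ → ℝ≥0∞) :
    ENNReal.ofReal |a| * ∫⁻ x, g (a * x + b) = ∫⁻ y, g y := by
  have hbij : Function.Bijective fun x => a * x + b :=
    ⟨fun x y h => by simpa [ha] using h, fun y => ⟨(y - b) / a, by field_simp; ring⟩⟩
  have hderiv (x : ℝ) : HasDerivAt (fun x => a * x + b) a x := by
    simpa using ((hasDerivAt_id x).const_mul a).add_const b
  have h := lintegral_image_eq_lintegral_abs_deriv_mul MeasurableSet.univ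
    (fun x _ => (hderiv x).hasDerivWithinAt) hbij.injective.injOn g
  rw [Set.image_univ, hbij.surjective.range_eq, setLIntegral_univ, setLIntegral_univ,
    lintegral_const_mul' _ _ ENNReal.ofReal_ne_top] at h
  exact h.symm

theorem ofReal_abs_mul_lintegral_comp_two_mul_add_le (a b : ℝ) (g : ℝ → ℝ≥0∞) :
    ENNReal.ofReal |a| * ∫⁻ x, g (2 * a * x + b) ≤ ∫⁻ y, g y := by
  rcases eq_or_ne a 0 with rfl | ha
  · simp
  refine le_trans ?_ (ofReal_abs_mul_lintegral_comp_mul_add (mul_ne_zero two_ne_zero ha) b g).le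
  gcongr ENNReal.ofReal ?_ * _
  rw [abs_mul, abs_two]
  linarith [abs_nonneg a]

theorem lintegral_lintegral_lintegral_rotate {X Y Z : Type*} [MeasurableSpace X]
    [MeasurableSpace Y] [MeasurableSpace Z] {μ : Measure X} {ν : Measure Y} {ρ : Measure Z}
    [SFinite μ] [SFinite ν] [SFinite ρ]
    {f : X → Y → Z → ℝ≥0∞} (hf : Measurable fun q : X × Y × Z => f q.1 q.2.1 q.2.2) :
    ∫⁻ z, ∫⁻ x, ∫⁻ y, f x y z ∂ν ∂μ ∂ρ = ∫⁻ x, ∫⁻ y, ∫⁻ z, f x y z ∂ρ ∂ν ∂μ := by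
  have hzx : Measurable fun q : Z × X => ∫⁻ y, f q.2 y q.1 ∂ν :=
    Measurable.lintegral_prod_right' (f := fun q : (Z × X) × Y => f q.1.2 q.2 q.1.1)
      (hf.comp (by fun_prop : Measurable fun q : (Z × X) × Y => (q.1.2, q.2, q.1.1)))
  rw [lintegral_lintegral_swap hzx.aemeasurable]
  refine lintegral_congr fun x => lintegral_lintegral_swap (Measurable.aemeasurable ?_)
  exact hf.comp (by fun_prop : Measurable fun q : Z × Y => (x, q.2, q.1))

theorem lintegral_lintegral_add_left {T G : Type*} [MeasurableSpace T] [MeasurableSpace G]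
    [AddCommGroup G] [MeasurableAdd₂ G] {τ : Measure T} {μ : Measure G} [SFinite τ] [SFinite μ]
    [μ.IsAddLeftInvariant] {Φ : T → G} (hΦ : Measurable Φ) {H : G → T → ℝ≥0∞}
    (hH : Measurable fun q : G × T => H q.1 q.2) :
    ∫⁻ x, ∫⁻ t, H (x + Φ t) t ∂τ ∂μ = ∫⁻ x, ∫⁻ t, H x t ∂τ ∂μ := by
  have hH' : Measurable fun q : G × T => H (q.1 + Φ q.2) q.2 :=
    hH.comp (by fun_prop : Measurable fun q : G × T => (q.1 + Φ q.2, q.2))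
  rw [lintegral_lintegral_swap hH.aemeasurable,
    lintegral_lintegral_swap (f := fun x t => H (x + Φ t) t) hH'.aemeasurable]
  exact lintegral_congr fun t => lintegral_add_right_eq_self (fun x => H x t) _

theorem lintegral_lintegral_comp_sub_mul_le {T G : Type*} [MeasurableSpace T] [MeasurableSpace G]
    [AddCommGroup G] [MeasurableAdd₂ G] [MeasurableSub₂ G] {τ : Measure T} {μ : Measure G}
    [SFinite τ] [SFinite μ] [μ.IsAddLeftInvariant] {Φ : T → G} (hΦ : Measurable Φ) {f : G → ℝ≥0∞}
    (hf : Measurable f) {W : G → T → ℝ≥0∞} (hW : Measurable fun q : G × T => W q.1 q.2) {N : ℝ≥0∞}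
    (h : ∀ y, ∫⁻ t, W (y + Φ t) t ∂τ ≤ N) :
    ∫⁻ x, ∫⁻ t, f (x - Φ t) * W x t ∂τ ∂μ ≤ (∫⁻ x, f x ∂μ) * N := by
  rw [← lintegral_lintegral_add_left hΦ (H := fun x t => f (x - Φ t) * W x t) (by fun_prop),
    ← lintegral_mul_const _ hf]
  refine lintegral_mono fun y => ?_
  have hWy : Measurable fun t => W (y + Φ t) t :=
    hW.comp (by fun_prop : Measurable fun t => (y + Φ t, t))
  simp only [add_sub_cancel_right]
  rw [lintegral_const_mul _ hWy]
  gcongr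
  exact h y

end ChangeOfVariables

section Sublevel

variable {X Y : Type*} [MeasurableSpace X] [MeasurableSpace Y]

theorem measure_univ_sq_le_lintegral_of_sublevel_le {μ : Measure X} {K : X → ℝ≥0∞}
    (hK : Measurable K) {c : ℝ≥0∞} (hc₀ : c ≠ 0) (hc : c ≠ ⊤)
    (h : ∀ δ : ℝ≥0, μ {x | K x ≤ δ} ≤ c * δ) :
    μ Set.univ ^ 2 ≤ 4 * c * ∫⁻ x, K x ∂μ := by
  have hcover (δ : ℝ≥0) : μ Set.univ ≤ c * δ + μ {x | (δ : ℝ≥0∞) ≤ K x} :=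
    calc μ Set.univ ≤ μ ({x | K x ≤ δ} ∪ {x | (δ : ℝ≥0∞) ≤ K x}) :=
          measure_mono fun x _ => le_total (K x) δ
      _ ≤ _ := (measure_union_le _ _).trans (add_le_add (h δ) le_rfl)
  by_cases hμ : μ Set.univ = ⊤
  · have hint : ∫⁻ x, K x ∂μ = ⊤ := by
      have h1 : μ {x | 1 ≤ K x} = ⊤ := by simpa [hμ, hc] using hcover 1
      simpa [h1] using mul_meas_ge_le_lintegral hK (μ := μ) 1
    simp [hint, ENNReal.mul_top, hc₀]
  have h2c₀ : 2 * c ≠ 0 := mul_ne_zero two_ne_zero hc₀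
  have h2c : 2 * c ≠ ⊤ := ENNReal.mul_ne_top ENNReal.ofNat_ne_top hc
  obtain ⟨δ, hδ⟩ : ∃ δ : ℝ≥0, (δ : ℝ≥0∞) = μ Set.univ / (2 * c) :=
    ⟨_, ENNReal.coe_toNNReal (ENNReal.div_ne_top hμ h2c₀)⟩
  have hm : μ Set.univ = c * δ + c * δ := by
    rw [hδ, ← two_mul, ← mul_assoc, ENNReal.mul_div_cancel h2c₀ h2c]
  have hhalf : c * δ ≤ μ {x | (δ : ℝ≥0∞) ≤ K x} :=
    (ENNReal.add_le_add_iff_left (ENNReal.mul_ne_top hc ENNReal.coe_ne_top)).1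
      (hm ▸ hcover δ)
  calc μ Set.univ ^ 2 = 4 * c * (δ * (c * δ)) := by rw [hm]; ring
    _ ≤ 4 * c * (δ * μ {x | (δ : ℝ≥0∞) ≤ K x}) := by gcongr
    _ ≤ _ := by gcongr; exact mul_meas_ge_le_lintegral hK _

theorem measure_prod_le_of_slice_le {μ : Measure X} {ν : Measure Y} [SFinite ν] {Q : Set (X × Y)}
    (hQ : MeasurableSet Q) {I : Set X} (hQI : ∀ q ∈ Q, q.1 ∈ I) {c : ℝ≥0∞}
    (h : ∀ x ∈ I, ν (Prod.mk x ⁻¹' Q) ≤ c) : (μ.prod ν) Q ≤ c * μ I := by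
  have hsupp : Function.support (fun x => ν (Prod.mk x ⁻¹' Q)) ⊆ I := by
    intro x hx
    obtain ⟨y, hy⟩ := nonempty_of_measure_ne_zero hx
    exact hQI _ hy
  calc (μ.prod ν) Q = ∫⁻ x in I, ν (Prod.mk x ⁻¹' Q) ∂μ := by
        rw [Measure.prod_apply hQ, setLIntegral_eq_of_support_subset hsupp]
    _ ≤ ∫⁻ _ in I, c ∂μ := setLIntegral_mono measurable_const h
    _ = c * μ I := setLIntegral_const I c

theorem measure_le_mul_of_subset_iUnion_preimage_iterate {μ : Measure X} {r : X → X}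
    (hr : MeasurePreserving r μ μ) {s t : Set X} (ht : MeasurableSet t) {n : ℕ}
    (h : s ⊆ ⋃ i ∈ Finset.range n, r^[i] ⁻¹' t) : μ s ≤ n * μ t :=
  calc μ s ≤ ∑ i ∈ Finset.range n, μ (r^[i] ⁻¹' t) :=
        (measure_mono h).trans (measure_biUnion_finset_le _ _)
    _ = n * μ t := by simp [(hr.iterate _).measure_preimage ht.nullMeasurableSet]

theorem comp_measure_le_of_forall_finite {μ : Measure X} [SigmaFinite μ] {g : ℝ≥0∞ → ℝ≥0∞}
    (hg : Continuous g) {A : Set X} (hA : MeasurableSet A) {M : ℝ≥0∞}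
    (h : ∀ A' ⊆ A, MeasurableSet A' → μ A' ≠ ⊤ → g (μ A') ≤ M) : g (μ A) ≤ M := by
  have hmono : Monotone fun n => μ (A ∩ spanningSets μ n) := fun i j hij =>
    measure_mono (Set.inter_subset_inter_right A (monotone_spanningSets μ hij))
  have hsup : ⨆ n, μ (A ∩ spanningSets μ n) = μ A := by
    simpa only [Measure.restrict_apply hA] using Measure.iSup_restrict_spanningSets (μ := μ) A
  refine le_of_tendsto' ((hg.tendsto _).comp (hsup ▸ tendsto_atTop_iSup hmono)) fun n =>
    h _ Set.inter_subset_left (hA.inter (measurableSet_spanningSets μ n)) ?_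
  exact measure_ne_top_of_subset Set.inter_subset_right (measure_spanningSets_lt_top μ n).ne

end Sublevel

section TriangleDet

/-- `ψ` expands distances on `B` by a factor at least `κ`. -/
def ExpandsOn (κ : ℝ) (ψ : ℝ → ℝ) (B : Set ℝ) : Prop :=
  ∀ b ∈ B, ∀ b' ∈ B, κ * |b - b'| ≤ |ψ b - ψ b'|

theorem expandsOn_of_le_abs_deriv {ψ ψ' : ℝ → ℝ} {κ : ℝ} {B : Set ℝ} (hB : B.OrdConnected)
    (hψ : ∀ b ∈ B, HasDerivAt ψ (ψ' b) b) (hκ : ∀ b ∈ B, κ ≤ |ψ' b|) : ExpandsOn κ ψ B := by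
  intro b hb b' hb'
  wlog hlt : b < b' generalizing b b'
  · rcases (not_lt.1 hlt).eq_or_lt with rfl | h
    · simp
    · rw [abs_sub_comm b, abs_sub_comm (ψ b)]
      exact this b' hb' b hb h
  obtain ⟨c, hc, hslope⟩ := exists_hasDerivAt_eq_slope ψ ψ' hlt
    (fun x hx => (hψ x (hB.out hb hb' hx)).continuousAt.continuousWithinAt)
    (fun x hx => hψ x (hB.out hb hb' (Set.Ioo_subset_Icc_self hx)))
  have hbb' : b' - b ≠ 0 := (sub_pos.2 hlt).ne'
  have hmean : ψ b - ψ b' = ψ' c * (b - b') := by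
    rw [hslope]
    field_simp
    ring
  rw [hmean, abs_mul]
  gcongr
  exact hκ c (hB.out hb hb' (Set.Ioo_subset_Icc_self hc))

theorem volume_sublevel_le_of_expandsOn {ψ : ℝ → ℝ} {B : Set ℝ} {κ : ℝ} (hκ : 0 < κ)
    (hψ : ExpandsOn κ ψ B) {w : ℝ} (hw : w ≠ 0) (e d : ℝ) :
    volume {b | b ∈ B ∧ |w * ψ b - e| ≤ d} ≤ ENNReal.ofReal (2 * d / (κ * |w|)) := by
  refine (Real.volume_le_diam _).trans (Metric.ediam_le ?_)
  rintro b ⟨hb, hbd⟩ b' ⟨hb', hbd'⟩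
  rw [edist_dist, Real.dist_eq]
  refine ENNReal.ofReal_le_ofReal ?_
  rw [le_div_iff₀ (mul_pos hκ (abs_pos.2 hw))]
  calc |b - b'| * (κ * |w|) = |w| * (κ * |b - b'|) := by ring
    _ ≤ |w| * |ψ b - ψ b'| := by gcongr; exact hψ b hb b' hb'
    _ = |(w * ψ b - e) - (w * ψ b' - e)| := by rw [← abs_mul]; congr 1; ring
    _ ≤ |w * ψ b - e| + |w * ψ b' - e| := abs_sub _ _
    _ ≤ 2 * d := by linarith

/-- Twice the signed area of the triangle with vertices `(tᵢ.1, ψ tᵢ.2)`. -/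
def triangleDet (ψ : ℝ → ℝ) (t₁ t₂ t₃ : ℝ × ℝ) : ℝ :=
  (t₁.1 - t₂.1) * (ψ t₁.2 - ψ t₃.2) - (t₁.1 - t₃.1) * (ψ t₁.2 - ψ t₂.2)

theorem triangleDet_rotate (ψ : ℝ → ℝ) (t₁ t₂ t₃ : ℝ × ℝ) :
    triangleDet ψ t₂ t₃ t₁ = triangleDet ψ t₁ t₂ t₃ := by
  simp only [triangleDet]
  ring

@[fun_prop]
theorem measurable_triangleDet {α : Type*} [MeasurableSpace α] {ψ : ℝ → ℝ} (hψ : Measurable ψ)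
    {f g h : α → ℝ × ℝ} (hf : Measurable f) (hg : Measurable g) (hh : Measurable h) :
    Measurable fun a => triangleDet ψ (f a) (g a) (h a) := by
  unfold triangleDet
  fun_prop

theorem volume_triangleDet_sublevel_le {ψ : ℝ → ℝ} (hψm : Measurable ψ) {B : Set ℝ} {κ : ℝ}
    (hκ : 0 < κ) (hψ : ExpandsOn κ ψ B) {A : Set (ℝ × ℝ)} (hA : MeasurableSet A)
    (hAB : ∀ t ∈ A, t.2 ∈ B) (t₁ t₂ : ℝ × ℝ) (d : ℝ) :
    volume {t | t ∈ A ∧ |t.1 - t₂.1| ≤ |t₁.1 - t₂.1| ∧ |triangleDet ψ t₁ t₂ t| ≤ d}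
      ≤ ENNReal.ofReal (4 * d / κ) := by
  set w := t₁.1 - t₂.1 with hw
  set Q := {t | t ∈ A ∧ |t.1 - t₂.1| ≤ |w| ∧ |triangleDet ψ t₁ t₂ t| ≤ d}
  have hQ : MeasurableSet Q := by
    have hwidth : MeasurableSet {t : ℝ × ℝ | |t.1 - t₂.1| ≤ |w|} :=
      measurableSet_le (by fun_prop) measurable_const
    have hdet : MeasurableSet {t : ℝ × ℝ | |triangleDet ψ t₁ t₂ t| ≤ d} :=
      measurableSet_le (by fun_prop) measurable_const
    exact hA.inter (hwidth.inter hdet)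
  have hQI : ∀ t ∈ Q, t.1 ∈ Metric.closedBall t₂.1 |w| := fun t ht => ht.2.1
  rcases eq_or_ne w 0 with hw0 | hw0
  · refine (measure_prod_le_of_slice_le hQ hQI fun _ _ => le_top).trans ?_
    simp [hw0]
  have hslice (a : ℝ) : volume (Prod.mk a ⁻¹' Q) ≤ ENNReal.ofReal (2 * d / (κ * |w|)) := by
    refine (measure_mono ?_).trans (volume_sublevel_le_of_expandsOn hκ hψ hw0
      (w * ψ t₁.2 - (t₁.1 - a) * (ψ t₁.2 - ψ t₂.2)) d)
    rintro b ⟨hbA, -, hbd⟩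
    refine ⟨hAB _ hbA, ?_⟩
    rw [triangleDet, ← hw, ← abs_neg] at hbd
    convert hbd using 2
    ring
  refine (measure_prod_le_of_slice_le hQ hQI fun a _ => hslice a).trans_eq ?_
  rw [Real.volume_closedBall, ← ENNReal.ofReal_mul' (by positivity)]
  congr 1
  have := abs_pos.2 hw0
  field_simp
  ring

theorem measure_prod_prod_sublevel_le_of_rotate {X : Type*} [MeasurableSpace X] {μ : Measure X}
    [SFinite μ] {K : X × X × X → ℝ≥0∞} (hK : Measurable K)
    (hrot : ∀ x y z, K (y, z, x) = K (x, y, z)) {G : Set (X × X × X)} (hG : MeasurableSet G)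
    (hcov : ∀ x y z, (x, y, z) ∈ G ∨ (y, z, x) ∈ G ∨ (z, x, y) ∈ G) {δ c : ℝ≥0∞}
    (h : ∀ x y, μ {z | (x, y, z) ∈ G ∧ K (x, y, z) ≤ δ} ≤ c) :
    (μ.prod (μ.prod μ)) {q | K q ≤ δ} ≤ 3 * c * μ Set.univ ^ 2 := by
  have hT : MeasurableSet {q | q ∈ G ∧ K q ≤ δ} := hG.inter (measurableSet_le hK measurable_const)
  have hr : MeasurePreserving (fun q : X × X × X => (q.2.1, q.2.2, q.1))
      (μ.prod (μ.prod μ)) (μ.prod (μ.prod μ)) :=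
    (measurePreserving_prodAssoc μ μ μ).comp Measure.measurePreserving_swap
  have hTμ : (μ.prod (μ.prod μ)) {q | q ∈ G ∧ K q ≤ δ} ≤ c * μ Set.univ * μ Set.univ :=
    measure_prod_le_of_slice_le hT (fun _ _ => Set.mem_univ _) fun x _ =>
      measure_prod_le_of_slice_le (measurable_prodMk_left hT) (fun _ _ => Set.mem_univ _)
        fun y _ => h x y
  calc (μ.prod (μ.prod μ)) {q | K q ≤ δ} ≤ (3 : ℕ) * (μ.prod (μ.prod μ)) {q | q ∈ G ∧ K q ≤ δ} := by
        refine measure_le_mul_of_subset_iUnion_preimage_iterate hr hT ?_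
        rintro ⟨x, y, z⟩ hq
        have hq' : K (y, z, x) ≤ δ := (hrot x y z).trans_le hq
        have hq'' : K (z, x, y) ≤ δ := (hrot y z x).trans_le hq'
        simp only [Set.mem_iUnion, Finset.mem_range]
        rcases hcov x y z with hxyz | hyzx | hzxy
        · exact ⟨0, by norm_num, hxyz, hq⟩
        · exact ⟨1, by norm_num, hyzx, hq'⟩
        · exact ⟨2, by norm_num, hzxy, hq''⟩
    _ ≤ (3 : ℕ) * (c * μ Set.univ * μ Set.univ) := by gcongr
    _ = 3 * c * μ Set.univ ^ 2 := by push_cast; ring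

theorem measure_univ_pow_four_le_lintegral_of_rotate {X : Type*} [MeasurableSpace X]
    {μ : Measure X} [IsFiniteMeasure μ] {K : X × X × X → ℝ≥0∞} (hK : Measurable K)
    (hrot : ∀ x y z, K (y, z, x) = K (x, y, z)) {G : Set (X × X × X)} (hG : MeasurableSet G)
    (hcov : ∀ x y z, (x, y, z) ∈ G ∨ (y, z, x) ∈ G ∨ (z, x, y) ∈ G) {c : ℝ≥0∞} (hc₀ : c ≠ 0)
    (hc : c ≠ ⊤)
    (h : ∀ (δ : ℝ≥0) (x y : X), μ {z | (x, y, z) ∈ G ∧ K (x, y, z) ≤ δ} ≤ c * δ) :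
    μ Set.univ ^ 4 ≤ 12 * c * ∫⁻ x, ∫⁻ y, ∫⁻ z, K (x, y, z) ∂μ ∂μ ∂μ := by
  rcases eq_or_ne (μ Set.univ) 0 with hμ₀ | hμ₀
  · simp [hμ₀]
  have hμ : μ Set.univ ≠ ⊤ := measure_ne_top _ _
  have hsub (δ : ℝ≥0) : (μ.prod (μ.prod μ)) {q | K q ≤ δ} ≤ 3 * c * μ Set.univ ^ 2 * δ :=
    (measure_prod_prod_sublevel_le_of_rotate hK hrot hG hcov (h δ)).trans_eq (by ring)
  have hcheb := measure_univ_sq_le_lintegral_of_sublevel_le hK (by simp [hc₀, hμ₀])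
    (ENNReal.mul_ne_top (ENNReal.mul_ne_top ENNReal.ofNat_ne_top hc) (ENNReal.pow_ne_top hμ)) hsub
  have hfubini : ∫⁻ q, K q ∂μ.prod (μ.prod μ) = ∫⁻ x, ∫⁻ y, ∫⁻ z, K (x, y, z) ∂μ ∂μ ∂μ := by
    rw [lintegral_prod _ hK.aemeasurable]
    exact lintegral_congr fun x => lintegral_prod _ (hK.comp measurable_prodMk_left).aemeasurable
  rw [← Set.univ_prod_univ, Measure.prod_prod, ← Set.univ_prod_univ, Measure.prod_prod,
    hfubini] at hcheb
  refine (ENNReal.mul_le_mul_iff_right (pow_ne_zero 2 hμ₀) (ENNReal.pow_ne_top hμ)).1 ?_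
  calc μ Set.univ ^ 2 * μ Set.univ ^ 4
      = (μ Set.univ * (μ Set.univ * μ Set.univ)) ^ 2 := by ring
    _ ≤ _ := hcheb
    _ = _ := by ring

theorem volume_pow_four_le_lintegral_triangleDet {ψ : ℝ → ℝ} (hψm : Measurable ψ) {B : Set ℝ}
    {κ : ℝ} (hκ : 0 < κ) (hψ : ExpandsOn κ ψ B) {A : Set (ℝ × ℝ)} (hA : MeasurableSet A)
    (hAB : ∀ t ∈ A, t.2 ∈ B) :
    volume A ^ 4 ≤ ENNReal.ofReal (48 / κ) * ∫⁻ t₁ in A, ∫⁻ t₂ in A, ∫⁻ t₃ in A,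
      ENNReal.ofReal |triangleDet ψ t₁ t₂ t₃| := by
  refine comp_measure_le_of_forall_finite (by fun_prop : Continuous fun m : ℝ≥0∞ => m ^ 4) hA
    fun A' hA' hA'm hfin => ?_
  have : IsFiniteMeasure (volume.restrict A') := isFiniteMeasure_restrict.2 hfin
  -- Up to a rotation, the first two vertices are the ones farthest apart horizontally.
  have hcov (x y z : ℝ × ℝ) : |z.1 - y.1| ≤ |x.1 - y.1| ∨ |x.1 - z.1| ≤ |y.1 - z.1| ∨
      |y.1 - x.1| ≤ |z.1 - x.1| := by
    rw [abs_sub_comm y.1 x.1, abs_sub_comm z.1 y.1, abs_sub_comm x.1 z.1]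
    grind
  have hslice (δ : ℝ≥0) (x y : ℝ × ℝ) :
      volume.restrict A' {z | |z.1 - y.1| ≤ |x.1 - y.1| ∧
        ENNReal.ofReal |triangleDet ψ x y z| ≤ δ} ≤ ENNReal.ofReal (4 / κ) * δ := by
    rw [Measure.restrict_apply' hA'm, ← ENNReal.ofReal_coe_nnreal,
      ← ENNReal.ofReal_mul (by positivity), div_mul_eq_mul_div]
    refine (measure_mono ?_).trans (volume_triangleDet_sublevel_le hψm hκ hψ hA'm
      (fun t ht => hAB t (hA' ht)) x y δ)
    rintro t ⟨⟨hfar, hdet⟩, htA⟩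
    exact ⟨htA, hfar, (ENNReal.ofReal_le_ofReal_iff δ.coe_nonneg).1 hdet⟩
  have key := measure_univ_pow_four_le_lintegral_of_rotate (μ := volume.restrict A')
    (K := fun q => ENNReal.ofReal |triangleDet ψ q.1 q.2.1 q.2.2|) (by fun_prop)
    (fun x y z => by simp only [triangleDet_rotate])
    (G := {q | |q.2.2.1 - q.2.1.1| ≤ |q.1.1 - q.2.1.1|})
    (measurableSet_le (by fun_prop) (by fun_prop)) hcov
    (ENNReal.ofReal_pos.2 (by positivity)).ne' ENNReal.ofReal_ne_top hslice
  have hconst : (12 : ℝ≥0∞) * ENNReal.ofReal (4 / κ) = ENNReal.ofReal (48 / κ) := by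
    rw [← ENNReal.ofReal_ofNat 12, ← ENNReal.ofReal_mul (by norm_num)]
    congr 1
    ring
  rw [Measure.restrict_apply_univ, hconst] at key
  refine key.trans ?_
  gcongr

theorem volume_pow_three_le_lintegral_abs_sub {B : Set ℝ} (hB : volume B ≠ ⊤) {A : Set (ℝ × ℝ)}
    (hA : MeasurableSet A) (hAB : ∀ t ∈ A, t.2 ∈ B) :
    volume A ^ 3 ≤ 8 * volume B * ∫⁻ s in A, ∫⁻ t in A, ENNReal.ofReal |s.1 - t.1| := by
  have hAsub : A ⊆ Set.univ ×ˢ B := fun t ht => ⟨trivial, hAB t ht⟩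
  rcases eq_or_ne (volume B) 0 with hB₀ | hB₀
  · have hA₀ : volume A = 0 := measure_mono_null hAsub (by
      rw [Measure.volume_eq_prod, Measure.prod_prod, hB₀, mul_zero])
    simp [hA₀]
  have hpoint (s : ℝ × ℝ) :
      volume A ^ 2 ≤ 8 * volume B * ∫⁻ t in A, ENNReal.ofReal |s.1 - t.1| := by
    have hslice (δ : ℝ≥0) : volume.restrict A {t | ENNReal.ofReal |s.1 - t.1| ≤ δ} ≤
        2 * volume B * δ := by
      rw [Measure.restrict_apply' hA]
      calc _ ≤ volume (Metric.closedBall s.1 δ ×ˢ B) := by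
            refine measure_mono ?_
            rintro t ⟨hts, htA⟩
            rw [Set.mem_ofPred_eq, ← ENNReal.ofReal_coe_nnreal,
              ENNReal.ofReal_le_ofReal_iff δ.coe_nonneg, abs_sub_comm] at hts
            exact ⟨hts, hAB t htA⟩
        _ = 2 * volume B * δ := by
            rw [Measure.volume_eq_prod, Measure.prod_prod, Real.volume_closedBall,
              ENNReal.ofReal_mul zero_le_two, ENNReal.ofReal_coe_nnreal, ENNReal.ofReal_ofNat]
            ring
    have hcheb := measure_univ_sq_le_lintegral_of_sublevel_le (by fun_prop)
      (mul_ne_zero two_ne_zero hB₀) (ENNReal.mul_ne_top ENNReal.ofNat_ne_top hB) hslice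
    rw [Measure.restrict_apply_univ] at hcheb
    exact hcheb.trans_eq (by ring)
  calc volume A ^ 3 = ∫⁻ _ in A, volume A ^ 2 := by rw [setLIntegral_const]; ring
    _ ≤ ∫⁻ s in A, 8 * volume B * ∫⁻ t in A, ENNReal.ofReal |s.1 - t.1| := lintegral_mono hpoint
    _ = _ := lintegral_const_mul' _ _ (ENNReal.mul_ne_top ENNReal.ofNat_ne_top hB)

end TriangleDet

section Averaging

/-- The lift of `t` to the graph of `φ`, for which `T_R f(x) = ∫_R f(x - graphLift φ t) dt`. -/
def graphLift (φ : ℝ × ℝ → ℝ) (t : ℝ × ℝ) : ℝ × ℝ × ℝ := (t.1, t.2, φ t)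

variable {φ : ℝ × ℝ → ℝ}

@[fun_prop]
theorem measurable_graphLift (hφ : Measurable φ) : Measurable (graphLift φ) := by
  unfold graphLift
  fun_prop

theorem graphLift_sub_graphLift_sub (t u : ℝ × ℝ) :
    graphLift φ t - graphLift φ (t - u) = (u.1, u.2, φ t - φ (t - u)) := by
  simp [graphLift]

theorem lintegral_lintegral_eq_lintegral_prod_prod {f : ℝ × ℝ × ℝ → ℝ≥0∞} (hf : Measurable f) :
    ∫⁻ u : ℝ × ℝ, ∫⁻ p : ℝ, f (u.1, u.2, p) = ∫⁻ x, f x := by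
  rw [← lintegral_prod (fun q : (ℝ × ℝ) × ℝ => f (q.1.1, q.1.2, q.2)) (by fun_prop),
    ← Measure.volume_eq_prod]
  exact (volume_preserving_prodAssoc (α₁ := ℝ) (β₁ := ℝ) (γ₁ := ℝ)).lintegral_comp hf

theorem lintegral_comp_graphLift_sub_le (hφ : Measurable φ) {R : Set (ℝ × ℝ)}
    {K : ℝ × ℝ → ℝ × ℝ → ℝ≥0∞} (hK : Measurable fun q : (ℝ × ℝ) × ℝ × ℝ => K q.1 q.2) {M : ℝ≥0∞}
    (hJ : ∀ᵐ u, ∀ g : ℝ → ℝ≥0∞, Measurable g →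
      ∫⁻ t in R, K t (t - u) * g (φ t - φ (t - u)) ≤ M * ∫⁻ y, g y)
    {f : ℝ × ℝ × ℝ → ℝ≥0∞} (hf : Measurable f) :
    ∫⁻ t in R, ∫⁻ s, K t s * f (graphLift φ t - graphLift φ s) ≤ M * ∫⁻ x, f x := by
  have hf' : Measurable fun u : ℝ × ℝ => ∫⁻ p : ℝ, f (u.1, u.2, p) :=
    Measurable.lintegral_prod_right' (f := fun q : (ℝ × ℝ) × ℝ => f (q.1.1, q.1.2, q.2))
      (by fun_prop)
  calc _ = ∫⁻ t in R, ∫⁻ u, K t (t - u) * f (u.1, u.2, φ t - φ (t - u)) :=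
        lintegral_congr fun t => by
          rw [← lintegral_sub_left_eq_self _ t]
          simp only [graphLift_sub_graphLift_sub]
    _ = ∫⁻ u, ∫⁻ t in R, K t (t - u) * f (u.1, u.2, φ t - φ (t - u)) :=
        lintegral_lintegral_swap (by fun_prop)
    _ ≤ ∫⁻ u : ℝ × ℝ, M * ∫⁻ p : ℝ, f (u.1, u.2, p) :=
        lintegral_mono_ae (hJ.mono fun u hu => hu (fun p => f (u.1, u.2, p)) (by fun_prop))
    _ = M * ∫⁻ x, f x := by
        rw [lintegral_const_mul _ hf', lintegral_lintegral_eq_lintegral_prod_prod hf]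

theorem lintegral_lintegral_comp_graphLift_sub_le (hφ : Measurable φ)
    {K : ℝ × ℝ → ℝ × ℝ → ℝ × ℝ → ℝ≥0∞}
    (hK : Measurable fun q : (ℝ × ℝ) × (ℝ × ℝ) × ℝ × ℝ => K q.1 q.2.1 q.2.2) {M : ℝ≥0∞}
    (hJ : ∀ᵐ u, ∀ v, ∀ g₁ g₂ : ℝ → ℝ≥0∞, Measurable g₁ → Measurable g₂ →
      ∫⁻ t, K t (t - u) (t - v) * (g₁ (φ t - φ (t - u)) * g₂ (φ t - φ (t - v))) ≤
        M * ((∫⁻ y, g₁ y) * ∫⁻ y, g₂ y))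
    {f₁ f₂ : ℝ × ℝ × ℝ → ℝ≥0∞} (hf₁ : Measurable f₁) (hf₂ : Measurable f₂) :
    ∫⁻ t, ∫⁻ s₁, ∫⁻ s₂, K t s₁ s₂ * (f₁ (graphLift φ t - graphLift φ s₁) *
      f₂ (graphLift φ t - graphLift φ s₂)) ≤ M * ((∫⁻ x, f₁ x) * ∫⁻ x, f₂ x) := by
  have hfib {f : ℝ × ℝ × ℝ → ℝ≥0∞} (hf : Measurable f) :
      Measurable fun u : ℝ × ℝ => ∫⁻ p : ℝ, f (u.1, u.2, p) :=
    Measurable.lintegral_prod_right' (f := fun q : (ℝ × ℝ) × ℝ => f (q.1.1, q.1.2, q.2))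
      (by fun_prop)
  calc _ = ∫⁻ t, ∫⁻ u, ∫⁻ v, K t (t - u) (t - v) *
        (f₁ (u.1, u.2, φ t - φ (t - u)) * f₂ (v.1, v.2, φ t - φ (t - v))) :=
        lintegral_congr fun t => by
          rw [← lintegral_sub_left_eq_self _ t]
          refine lintegral_congr fun u => ?_
          rw [← lintegral_sub_left_eq_self _ t]
          simp only [graphLift_sub_graphLift_sub]
    _ = ∫⁻ u, ∫⁻ v, ∫⁻ t, K t (t - u) (t - v) *
        (f₁ (u.1, u.2, φ t - φ (t - u)) * f₂ (v.1, v.2, φ t - φ (t - v))) :=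
        lintegral_lintegral_lintegral_rotate (by fun_prop)
    _ ≤ ∫⁻ u : ℝ × ℝ, ∫⁻ v : ℝ × ℝ,
        M * ((∫⁻ p : ℝ, f₁ (u.1, u.2, p)) * ∫⁻ p : ℝ, f₂ (v.1, v.2, p)) :=
        lintegral_mono_ae (hJ.mono fun u hu => lintegral_mono fun v =>
          hu v (fun p => f₁ (u.1, u.2, p)) (fun p => f₂ (v.1, v.2, p)) (by fun_prop) (by fun_prop))
    _ = ∫⁻ u : ℝ × ℝ, M * ((∫⁻ p : ℝ, f₁ (u.1, u.2, p)) * ∫⁻ x, f₂ x) :=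
        lintegral_congr fun u => by
          rw [lintegral_const_mul _ ((hfib hf₂).const_mul _), lintegral_const_mul _ (hfib hf₂),
            lintegral_lintegral_eq_lintegral_prod_prod hf₂]
    _ = M * ((∫⁻ x, f₁ x) * ∫⁻ x, f₂ x) := by
        rw [lintegral_const_mul _ ((hfib hf₁).mul_const _), lintegral_mul_const _ (hfib hf₁),
          lintegral_lintegral_eq_lintegral_prod_prod hf₁]

theorem lintegral_bilinear_graphLift_le (hφ : Measurable φ) {R : Set (ℝ × ℝ)}
    {K : ℝ × ℝ → ℝ × ℝ → ℝ≥0∞} (hK : Measurable fun q : (ℝ × ℝ) × ℝ × ℝ => K q.1 q.2) {M : ℝ≥0∞}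
    (hJ : ∀ᵐ u, ∀ g : ℝ → ℝ≥0∞, Measurable g →
      ∫⁻ t in R, K t (t - u) * g (φ t - φ (t - u)) ≤ M * ∫⁻ y, g y)
    {f₁ f₂ : ℝ × ℝ × ℝ → ℝ≥0∞} (hf₁ : Measurable f₁) (hf₂ : Measurable f₂) :
    ∫⁻ x, ∫⁻ t in R, f₁ (x - graphLift φ t) * ∫⁻ s, K t s * f₂ (x - graphLift φ s) ≤
      (∫⁻ x, f₁ x) * (M * ∫⁻ x, f₂ x) := by
  have : (volume : Measure (ℝ × ℝ × ℝ)).IsAddLeftInvariant := Measure.prod.instIsAddLeftInvariant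
  refine lintegral_lintegral_comp_sub_mul_le (measurable_graphLift hφ) hf₁
    (W := fun x t => ∫⁻ s, K t s * f₂ (x - graphLift φ s)) ?_ fun y => ?_
  · exact Measurable.lintegral_prod_right' (f := fun q : ((ℝ × ℝ × ℝ) × ℝ × ℝ) × ℝ × ℝ =>
      K q.1.2 q.2 * f₂ (q.1.1 - graphLift φ q.2)) (by fun_prop)
  · have h := lintegral_comp_graphLift_sub_le hφ hK hJ (hf₂.comp (measurable_const_add y))
    simpa only [Function.comp_apply, add_sub_assoc, lintegral_add_left_eq_self f₂ y] using h

theorem lintegral_trilinear_graphLift_le (hφ : Measurable φ) {K : ℝ × ℝ → ℝ × ℝ → ℝ × ℝ → ℝ≥0∞}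
    (hK : Measurable fun q : (ℝ × ℝ) × (ℝ × ℝ) × ℝ × ℝ => K q.1 q.2.1 q.2.2) {M : ℝ≥0∞}
    (hJ : ∀ᵐ u, ∀ v, ∀ g₁ g₂ : ℝ → ℝ≥0∞, Measurable g₁ → Measurable g₂ →
      ∫⁻ t, K t (t - u) (t - v) * (g₁ (φ t - φ (t - u)) * g₂ (φ t - φ (t - v))) ≤
        M * ((∫⁻ y, g₁ y) * ∫⁻ y, g₂ y))
    {f₁ f₂ f₃ : ℝ × ℝ × ℝ → ℝ≥0∞} (hf₁ : Measurable f₁) (hf₂ : Measurable f₂)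
    (hf₃ : Measurable f₃) :
    ∫⁻ x, ∫⁻ t, f₁ (x - graphLift φ t) * ∫⁻ s₁, ∫⁻ s₂, K t s₁ s₂ *
      (f₂ (x - graphLift φ s₁) * f₃ (x - graphLift φ s₂)) ≤
      (∫⁻ x, f₁ x) * (M * ((∫⁻ x, f₂ x) * ∫⁻ x, f₃ x)) := by
  have : (volume : Measure (ℝ × ℝ × ℝ)).IsAddLeftInvariant := Measure.prod.instIsAddLeftInvariant
  refine lintegral_lintegral_comp_sub_mul_le (measurable_graphLift hφ) hf₁
    (W := fun x t => ∫⁻ s₁, ∫⁻ s₂, K t s₁ s₂ *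
      (f₂ (x - graphLift φ s₁) * f₃ (x - graphLift φ s₂))) ?_ fun y => ?_
  · exact Measurable.lintegral_prod_right' (Measurable.lintegral_prod_right'
      (f := fun q : (((ℝ × ℝ × ℝ) × ℝ × ℝ) × ℝ × ℝ) × ℝ × ℝ => K q.1.1.2 q.1.2 q.2 *
        (f₂ (q.1.1.1 - graphLift φ q.1.2) * f₃ (q.1.1.1 - graphLift φ q.2))) (by fun_prop))
  · have h := lintegral_lintegral_comp_graphLift_sub_le hφ hK hJ
      (hf₂.comp (measurable_const_add y)) (hf₃.comp (measurable_const_add y))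
    simpa only [Function.comp_apply, add_sub_assoc, lintegral_add_left_eq_self f₂ y,
      lintegral_add_left_eq_self f₃ y] using h

/-- The part of `R` whose lift to the graph of `φ` carries `x` into `E`; its volume is
`T_R χ_E(x)`. -/
def incidenceSet (φ : ℝ × ℝ → ℝ) (R : Set (ℝ × ℝ)) (E : Set (ℝ × ℝ × ℝ)) (x : ℝ × ℝ × ℝ) :
    Set (ℝ × ℝ) :=
  {t | t ∈ R ∧ x - graphLift φ t ∈ E}

variable {R : Set (ℝ × ℝ)} {E : Set (ℝ × ℝ × ℝ)}

theorem measurableSet_incidenceSet (hφ : Measurable φ) (hR : MeasurableSet R)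
    (hE : MeasurableSet E) (x : ℝ × ℝ × ℝ) : MeasurableSet (incidenceSet φ R E x) :=
  hR.inter ((by fun_prop : Measurable fun t => x - graphLift φ t) hE)

theorem avgOp_indicator_one (hφ : Measurable φ) (hE : MeasurableSet E) (x : ℝ × ℝ × ℝ) :
    avgOp φ R (E.indicator 1) x = volume (incidenceSet φ R E x) := by
  have hm : MeasurableSet {t | x - graphLift φ t ∈ E} :=
    (by fun_prop : Measurable fun t => x - graphLift φ t) hE
  have hinter : incidenceSet φ R E x = {t | x - graphLift φ t ∈ E} ∩ R := Set.inter_comm _ _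
  rw [hinter, ← Measure.restrict_apply hm, ← lintegral_indicator_one hm]
  rfl

theorem measurable_avgOp (hφ : Measurable φ) {f : ℝ × ℝ × ℝ → ℝ≥0∞} (hf : Measurable f) :
    Measurable (avgOp φ R f) :=
  Measurable.lintegral_prod_right' (f := fun q : (ℝ × ℝ × ℝ) × (ℝ × ℝ) =>
    f (q.1.1 - q.2.1, q.1.2.1 - q.2.2, q.1.2.2 - φ q.2)) (by fun_prop)

theorem lintegral_avgOp_pow_three_le (hφ : Measurable φ) (hR : MeasurableSet R)
    {K : ℝ × ℝ → ℝ × ℝ → ℝ≥0∞} (hK : Measurable fun q : (ℝ × ℝ) × ℝ × ℝ => K q.1 q.2)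
    {c M : ℝ≥0∞} (hc : c ≠ ⊤)
    (hsub : ∀ A ⊆ R, MeasurableSet A → volume A ^ 3 ≤ c * ∫⁻ t in A, ∫⁻ s in A, K t s)
    (hJ : ∀ᵐ u, ∀ g : ℝ → ℝ≥0∞, Measurable g →
      ∫⁻ t in R, K t (t - u) * g (φ t - φ (t - u)) ≤ M * ∫⁻ y, g y) (hE : MeasurableSet E) :
    ∫⁻ x, avgOp φ R (E.indicator 1) x ^ 3 ≤ c * M * volume E ^ 2 := by
  have hf : Measurable (E.indicator (1 : ℝ × ℝ × ℝ → ℝ≥0∞)) := measurable_one.indicator hE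
  have hpoint (x : ℝ × ℝ × ℝ) : avgOp φ R (E.indicator 1) x ^ 3 ≤
      c * ∫⁻ t in R, E.indicator 1 (x - graphLift φ t) *
        ∫⁻ s, K t s * E.indicator 1 (x - graphLift φ s) := by
    have hA := measurableSet_incidenceSet hφ hR hE x
    rw [avgOp_indicator_one hφ hE]
    refine (hsub _ (fun t ht => ht.1) hA).trans (mul_le_mul_right ?_ c)
    refine (setLIntegral_mono' hA fun t ht => ?_).trans (lintegral_mono_set fun t ht => ht.1)
    rw [Set.indicator_of_mem ht.2, Pi.one_apply, one_mul]
    refine (setLIntegral_mono' hA fun s hs => ?_).trans (setLIntegral_le_lintegral _ _)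
    rw [Set.indicator_of_mem hs.2, Pi.one_apply, mul_one]
  calc _ ≤ _ := lintegral_mono hpoint
    _ = _ := lintegral_const_mul' _ _ hc
    _ ≤ c * (volume E * (M * volume E)) := by
        rw [← lintegral_indicator_one hE]
        gcongr
        exact lintegral_bilinear_graphLift_le hφ hK hJ hf hf
    _ = c * M * volume E ^ 2 := by ring

theorem lintegral_avgOp_pow_four_le (hφ : Measurable φ) (hR : MeasurableSet R)
    {K : ℝ × ℝ → ℝ × ℝ → ℝ × ℝ → ℝ≥0∞}
    (hK : Measurable fun q : (ℝ × ℝ) × (ℝ × ℝ) × ℝ × ℝ => K q.1 q.2.1 q.2.2)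
    {c M : ℝ≥0∞} (hc : c ≠ ⊤)
    (hsub : ∀ A ⊆ R, MeasurableSet A →
      volume A ^ 4 ≤ c * ∫⁻ t in A, ∫⁻ s₁ in A, ∫⁻ s₂ in A, K t s₁ s₂)
    (hJ : ∀ᵐ u, ∀ v, ∀ g₁ g₂ : ℝ → ℝ≥0∞, Measurable g₁ → Measurable g₂ →
      ∫⁻ t, K t (t - u) (t - v) * (g₁ (φ t - φ (t - u)) * g₂ (φ t - φ (t - v))) ≤
        M * ((∫⁻ y, g₁ y) * ∫⁻ y, g₂ y)) (hE : MeasurableSet E) :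
    ∫⁻ x, avgOp φ R (E.indicator 1) x ^ 4 ≤ c * M * volume E ^ 3 := by
  have hf : Measurable (E.indicator (1 : ℝ × ℝ × ℝ → ℝ≥0∞)) := measurable_one.indicator hE
  have hpoint (x : ℝ × ℝ × ℝ) : avgOp φ R (E.indicator 1) x ^ 4 ≤
      c * ∫⁻ t, E.indicator 1 (x - graphLift φ t) * ∫⁻ s₁, ∫⁻ s₂, K t s₁ s₂ *
        (E.indicator 1 (x - graphLift φ s₁) * E.indicator 1 (x - graphLift φ s₂)) := by
    have hA := measurableSet_incidenceSet hφ hR hE x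
    rw [avgOp_indicator_one hφ hE]
    refine (hsub _ (fun t ht => ht.1) hA).trans (mul_le_mul_right ?_ c)
    refine (setLIntegral_mono' hA fun t ht => ?_).trans (setLIntegral_le_lintegral _ _)
    rw [Set.indicator_of_mem ht.2, Pi.one_apply, one_mul]
    refine (setLIntegral_mono' hA fun s₁ hs₁ => ?_).trans (setLIntegral_le_lintegral _ _)
    refine (setLIntegral_mono' hA fun s₂ hs₂ => ?_).trans (setLIntegral_le_lintegral _ _)
    rw [Set.indicator_of_mem hs₁.2, Set.indicator_of_mem hs₂.2, Pi.one_apply, Pi.one_apply,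
      mul_one, mul_one]
  calc _ ≤ _ := lintegral_mono hpoint
    _ = _ := lintegral_const_mul' _ _ hc
    _ ≤ c * (volume E * (M * (volume E * volume E))) := by
        rw [← lintegral_indicator_one hE]
        gcongr
        exact lintegral_trilinear_graphLift_le hφ hK hJ hf hf hf
    _ = c * M * volume E ^ 3 := by ring

end Averaging

section QuadraticGraph

/-- The phase `t ↦ t.1 ^ 2 + γ t.2`, whose graph is the hypersurface averaged over. -/
def quadraticGraph (γ : ℝ → ℝ) (t : ℝ × ℝ) : ℝ := t.1 ^ 2 + γ t.2

@[fun_prop]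
theorem measurable_quadraticGraph {γ : ℝ → ℝ} (hγ : Measurable γ) :
    Measurable (quadraticGraph γ) := by
  unfold quadraticGraph
  fun_prop

theorem quadraticGraph_sub_quadraticGraph_sub (γ : ℝ → ℝ) (t u : ℝ × ℝ) :
    quadraticGraph γ t - quadraticGraph γ (t - u) =
      2 * u.1 * t.1 + (γ t.2 - γ (t.2 - u.2) - u.1 ^ 2) := by
  simp only [quadraticGraph, Prod.fst_sub, Prod.snd_sub]
  ring

theorem ae_fst_ne_zero : ∀ᵐ u : ℝ × ℝ, u.1 ≠ 0 :=
  Measure.quasiMeasurePreserving_fst.ae (Measure.ae_ne volume (0 : ℝ))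

theorem lintegral_abs_mul_comp_quadraticGraph_sub_le {γ : ℝ → ℝ} (hγ : Measurable γ) (B : Set ℝ)
    (u : ℝ × ℝ) {g : ℝ → ℝ≥0∞} (hg : Measurable g) :
    ∫⁻ t in Set.univ ×ˢ B, ENNReal.ofReal |u.1| *
      g (quadraticGraph γ t - quadraticGraph γ (t - u)) ≤ volume B * ∫⁻ y, g y := by
  rw [Measure.volume_eq_prod, ← Measure.prod_restrict, Measure.restrict_univ,
    lintegral_prod_symm _ (by fun_prop)]
  simp only [quadraticGraph_sub_quadraticGraph_sub]
  calc _ ≤ ∫⁻ _ in B, ∫⁻ y, g y := lintegral_mono fun b => by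
        rw [lintegral_const_mul' _ _ ENNReal.ofReal_ne_top]
        exact ofReal_abs_mul_lintegral_comp_two_mul_add_le _ _ _
    _ = volume B * ∫⁻ y, g y := by rw [setLIntegral_const, mul_comm]

theorem lintegral_abs_mul_abs_derivative_mul_comp_le (p : ℝ[X]) (a : ℝ) {k : ℝ → ℝ}
    (hk : Measurable k) {G : ℝ × ℝ → ℝ≥0∞} (hG : Measurable G) :
    ∫⁻ t : ℝ × ℝ, ENNReal.ofReal |a * p.derivative.eval t.2| *
      G (2 * a * t.1 + k t.2, p.eval t.2) ≤ p.natDegree * ∫⁻ q, G q := by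
  have hp : Measurable fun b => p.eval b := p.continuous.measurable
  have hp' : Measurable fun b => p.derivative.eval b := p.derivative.continuous.measurable
  rw [Measure.volume_eq_prod, lintegral_prod_symm _ (by fun_prop), lintegral_prod _ hG.aemeasurable]
  calc _ ≤ ∫⁻ b, ∫⁻ y, ENNReal.ofReal |p.derivative.eval b| * G (y, p.eval b) :=
        lintegral_mono fun b => by
          simp only [abs_mul, ENNReal.ofReal_mul (abs_nonneg _), mul_assoc]
          simp only [← mul_assoc 2 a]
          rw [lintegral_const_mul' _ _ ENNReal.ofReal_ne_top,
            lintegral_const_mul' _ _ ENNReal.ofReal_ne_top,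
            lintegral_const_mul' _ _ ENNReal.ofReal_ne_top, mul_left_comm]
          gcongr
          exact ofReal_abs_mul_lintegral_comp_two_mul_add_le a (k b) fun y => G (y, p.eval b)
    _ = ∫⁻ y, ∫⁻ b, ENNReal.ofReal |p.derivative.eval b| * G (y, p.eval b) :=
        lintegral_lintegral_swap (by fun_prop)
    _ ≤ ∫⁻ y, p.natDegree * ∫⁻ z, G (y, z) :=
        lintegral_mono fun y => lintegral_abs_derivative_mul_comp_le p fun z => G (y, z)
    _ = _ := lintegral_const_mul' _ _ (ENNReal.natCast_ne_top _)

/-- With `φ t = t.1 ^ 2 + γ t.2`, the part of `φ t - φ (t - v)` that depends on `t.2` alone once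
`φ t - φ (t - u)` is taken as the other coordinate. -/
noncomputable def chordPolynomial (γ : ℝ[X]) (u v : ℝ × ℝ) : ℝ[X] :=
  (γ - taylor (-v.2) γ) - Polynomial.C (v.1 / u.1) * (γ - taylor (-u.2) γ)

theorem natDegree_chordPolynomial_le (γ : ℝ[X]) (u v : ℝ × ℝ) :
    (chordPolynomial γ u v).natDegree ≤ γ.natDegree := by
  have hdiff (w : ℝ) : (γ - taylor w γ).natDegree ≤ γ.natDegree :=
    (natDegree_sub_le _ _).trans (max_le le_rfl (natDegree_taylor γ w).le)
  exact (natDegree_sub_le _ _).trans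
    (max_le (hdiff _) ((natDegree_C_mul_le _ _).trans (hdiff _)))

theorem mul_eval_derivative_chordPolynomial (γ : ℝ[X]) {u : ℝ × ℝ} (hu : u.1 ≠ 0) (v t : ℝ × ℝ) :
    u.1 * (chordPolynomial γ u v).derivative.eval t.2 =
      triangleDet (fun b => γ.derivative.eval b) t (t - u) (t - v) := by
  simp only [chordPolynomial, triangleDet, derivative_sub, derivative_C_mul,
    Polynomial.eval_sub, Polynomial.eval_mul, Polynomial.eval_C, taylor_apply, derivative_comp,
    derivative_X_add_C, one_mul, eval_comp, Polynomial.eval_add, Polynomial.eval_X, Prod.fst_sub,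
    Prod.snd_sub, ← sub_eq_add_neg]
  field_simp
  ring

theorem quadraticGraph_sub_eq_eval_chordPolynomial_add (γ : ℝ[X]) {u : ℝ × ℝ} (hu : u.1 ≠ 0)
    (v t : ℝ × ℝ) :
    quadraticGraph (γ.eval ·) t - quadraticGraph (γ.eval ·) (t - v) =
      (chordPolynomial γ u v).eval t.2 +
        (v.1 / u.1 * (quadraticGraph (γ.eval ·) t - quadraticGraph (γ.eval ·) (t - u)) +
          (v.1 * u.1 - v.1 ^ 2)) := by
  simp only [chordPolynomial, quadraticGraph_sub_quadraticGraph_sub, Polynomial.eval_sub,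
    Polynomial.eval_mul, Polynomial.eval_C, taylor_eval, ← sub_eq_add_neg]
  field_simp
  ring

-- `triangleDet γ'` is, up to a factor `2`, the Jacobian of
-- `t ↦ (φ t - φ (t - u), φ t - φ (t - v))`, where `φ t = t.1 ^ 2 + γ t.2`.
theorem lintegral_triangleDet_mul_comp_quadraticGraph_sub_le (γ : ℝ[X]) {u : ℝ × ℝ} (hu : u.1 ≠ 0)
    (v : ℝ × ℝ) {g₁ g₂ : ℝ → ℝ≥0∞} (hg₁ : Measurable g₁) (hg₂ : Measurable g₂) :
    ∫⁻ t, ENNReal.ofReal |triangleDet (fun b => γ.derivative.eval b) t (t - u) (t - v)| *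
      (g₁ (quadraticGraph (γ.eval ·) t - quadraticGraph (γ.eval ·) (t - u)) *
        g₂ (quadraticGraph (γ.eval ·) t - quadraticGraph (γ.eval ·) (t - v))) ≤
      γ.natDegree * ((∫⁻ y, g₁ y) * ∫⁻ y, g₂ y) := by
  have hγ : Measurable fun b => γ.eval b := γ.continuous.measurable
  set G : ℝ × ℝ → ℝ≥0∞ := fun q =>
    g₁ q.1 * g₂ (q.2 + (v.1 / u.1 * q.1 + (v.1 * u.1 - v.1 ^ 2)))
  have hG : Measurable G := by fun_prop
  have hGint : ∫⁻ q, G q = (∫⁻ y, g₁ y) * ∫⁻ y, g₂ y := by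
    rw [Measure.volume_eq_prod, lintegral_prod _ hG.aemeasurable, ← lintegral_mul_const _ hg₁]
    refine lintegral_congr fun y => ?_
    simp only [G]
    rw [lintegral_const_mul _ (by fun_prop), lintegral_add_right_eq_self]
  simp only [quadraticGraph_sub_eq_eval_chordPolynomial_add γ hu v,
    ← mul_eval_derivative_chordPolynomial γ hu v]
  simp only [quadraticGraph_sub_quadraticGraph_sub]
  refine (lintegral_abs_mul_abs_derivative_mul_comp_le (chordPolynomial γ u v) u.1
    (k := fun b => γ.eval b - γ.eval (b - u.2) - u.1 ^ 2) (by fun_prop) hG).trans ?_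
  rw [hGint]
  gcongr
  exact natDegree_chordPolynomial_le γ u v

end QuadraticGraph

section Pairing

theorem lintegral_pow_succ_le_s19 {α : Type*} [MeasurableSpace α] {μ : Measure α} {f : α → ℝ≥0∞}
    (hf : AEMeasurable f μ) (n : ℕ) :
    (∫⁻ x, f x ∂μ) ^ (n + 1) ≤ (∫⁻ x, f x ^ (n + 1) ∂μ) * μ Set.univ ^ n := by
  have hn : ((n + 1 : ℕ) : ℝ) ≠ 0 := by positivity
  have hroot (a : ℝ≥0∞) : (a ^ (n + 1)) ^ ((n + 1 : ℕ) : ℝ)⁻¹ = a := by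
    rw [← ENNReal.rpow_natCast, ENNReal.rpow_rpow_inv hn]
  have hpow (a : ℝ≥0∞) : (a ^ ((n : ℝ) * ((n + 1 : ℕ) : ℝ)⁻¹)) ^ (n + 1) = a ^ n := by
    rw [← ENNReal.rpow_natCast _ (n + 1), ← ENNReal.rpow_mul, mul_assoc, inv_mul_cancel₀ hn,
      mul_one, ENNReal.rpow_natCast]
  have holder := ENNReal.lintegral_mul_norm_pow_le (hf.pow_const (n + 1))
    (aemeasurable_const (b := (1 : ℝ≥0∞))) (p := ((n + 1 : ℕ) : ℝ)⁻¹)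
    (q := n * ((n + 1 : ℕ) : ℝ)⁻¹) (by positivity) (by positivity)
    (by push_cast at hn ⊢; field_simp; ring)
  simp only [hroot, ENNReal.one_rpow, mul_one, lintegral_const, one_mul] at holder
  calc _ ≤ _ := pow_le_pow_left' holder (n + 1)
    _ = _ := by rw [mul_pow, hpow, ENNReal.rpow_inv_natCast_pow (Nat.succ_ne_zero n)]

theorem pairing_eq_setLIntegral (φ : ℝ × ℝ → ℝ) (R : Set (ℝ × ℝ)) (E : Set (ℝ × ℝ × ℝ))
    {F : Set (ℝ × ℝ × ℝ)} (hF : MeasurableSet F) :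
    pairing φ R E F = ∫⁻ x in F, avgOp φ R (E.indicator 1) x := by
  rw [pairing, ← lintegral_indicator hF]
  refine lintegral_congr fun x => ?_
  by_cases hx : x ∈ F <;> simp [hx]

theorem pairing_pow_succ_le {φ : ℝ × ℝ → ℝ} (hφ : Measurable φ) (R : Set (ℝ × ℝ))
    {E F : Set (ℝ × ℝ × ℝ)} (hE : MeasurableSet E) (hF : MeasurableSet F) (n : ℕ) :
    pairing φ R E F ^ (n + 1) ≤
      (∫⁻ x, avgOp φ R (E.indicator 1) x ^ (n + 1)) * volume F ^ n := by
  have hT : AEMeasurable (avgOp φ R (E.indicator 1)) (volume.restrict F) :=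
    (measurable_avgOp hφ (measurable_one.indicator hE)).aemeasurable
  rw [pairing_eq_setLIntegral φ R E hF]
  refine (lintegral_pow_succ_le_s19 hT n).trans ?_
  rw [Measure.restrict_apply_univ]
  gcongr
  exact Measure.restrict_le_self

theorem pairing_union_le {φ : ℝ × ℝ → ℝ} (hφ : Measurable φ) (R R' : Set (ℝ × ℝ))
    {E F : Set (ℝ × ℝ × ℝ)} (hE : MeasurableSet E) (hF : MeasurableSet F) :
    pairing φ (R ∪ R') E F ≤ pairing φ R E F + pairing φ R' E F := by
  simp only [pairing_eq_setLIntegral φ _ E hF]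
  rw [← lintegral_add_left (measurable_avgOp hφ (measurable_one.indicator hE))]
  exact lintegral_mono fun x => lintegral_union_le _ _ _

variable {E F : Set (ℝ × ℝ × ℝ)} {B : Set ℝ}

theorem pairing_quadraticGraph_pow_three_le {γ : ℝ → ℝ} (hγ : Measurable γ)
    (hB : MeasurableSet B) (hB_top : volume B ≠ ⊤) (hE : MeasurableSet E) (hF : MeasurableSet F) :
    pairing (quadraticGraph γ) (Set.univ ×ˢ B) E F ^ 3 ≤
      8 * (volume B * volume E * volume F) ^ 2 := by
  have hT := lintegral_avgOp_pow_three_le (K := fun t s => ENNReal.ofReal |t.1 - s.1|)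
    (measurable_quadraticGraph hγ) (MeasurableSet.univ.prod hB) (by fun_prop)
    (ENNReal.mul_ne_top (by norm_num) hB_top)
    (fun A hAB hA => volume_pow_three_le_lintegral_abs_sub hB_top hA fun t ht => (hAB ht).2)
    (.of_forall fun u g hg => by
      simpa using lintegral_abs_mul_comp_quadraticGraph_sub_le hγ B u hg) hE
  calc _ ≤ _ := pairing_pow_succ_le (measurable_quadraticGraph hγ) _ hE hF 2
    _ ≤ 8 * volume B * volume B * volume E ^ 2 * volume F ^ 2 := by gcongr
    _ = _ := by ring

theorem pairing_quadraticGraph_pow_four_le {γ : ℝ[X]} {κ : ℝ} (hκ : 0 < κ)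
    (hγ : ExpandsOn κ (fun b => γ.derivative.eval b) B) (hB : MeasurableSet B)
    (hE : MeasurableSet E) (hF : MeasurableSet F) :
    pairing (quadraticGraph (γ.eval ·)) (Set.univ ×ˢ B) E F ^ 4 ≤
      ENNReal.ofReal (48 / κ) * γ.natDegree * (volume E * volume F) ^ 3 := by
  have hφ : Measurable (quadraticGraph (γ.eval ·)) :=
    measurable_quadraticGraph γ.continuous.measurable
  have hψ : Measurable fun b => γ.derivative.eval b := γ.derivative.continuous.measurable
  have hT := lintegral_avgOp_pow_four_le
    (K := fun t s₁ s₂ => ENNReal.ofReal |triangleDet (fun b => γ.derivative.eval b) t s₁ s₂|)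
    hφ (MeasurableSet.univ.prod hB) (by fun_prop) ENNReal.ofReal_ne_top
    (fun A hAB hA =>
      volume_pow_four_le_lintegral_triangleDet hψ hκ hγ hA fun t ht => (hAB ht).2)
    (ae_fst_ne_zero.mono fun u hu v g₁ g₂ hg₁ hg₂ =>
      lintegral_triangleDet_mul_comp_quadraticGraph_sub_le γ hu v hg₁ hg₂) hE
  calc _ ≤ _ := pairing_pow_succ_le hφ _ hE hF 3
    _ ≤ ENNReal.ofReal (48 / κ) * γ.natDegree * volume E ^ 3 * volume F ^ 3 := by gcongr
    _ = _ := by ring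

end Pairing

section Balance

theorem expandsOn_eval_derivative {γ : ℝ[X]} {κ : ℝ} (hκ : 0 ≤ κ) {n : ℕ}
    (hγ : ∀ b, κ * |b| ^ n ≤ |γ.derivative.derivative.eval b|) {L : ℝ} (hL : 0 ≤ L) {B : Set ℝ}
    (hB : B.OrdConnected) (hBL : ∀ b ∈ B, L ≤ |b|) :
    ExpandsOn (κ * L ^ n) (fun b => γ.derivative.eval b) B :=
  expandsOn_of_le_abs_deriv hB (fun b _ => γ.derivative.hasDerivAt b) fun b hb =>
    (mul_le_mul_of_nonneg_left (pow_le_pow_left₀ hL (hBL b hb) n) hκ).trans (hγ b)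

variable {E F : Set (ℝ × ℝ × ℝ)} {L : ℝ}

theorem pairing_strip_le {γ : ℝ → ℝ} (hγ : Measurable γ) (hE : MeasurableSet E)
    (hF : MeasurableSet F) (hL : 0 ≤ L) {n : ℕ}
    (hEF : volume E * volume F ≤ ENNReal.ofReal (L ^ (3 * n + 2))) :
    pairing (quadraticGraph γ) (Set.univ ×ˢ Set.Icc (-L) L) E F ≤
      ENNReal.ofReal (4 * L ^ (2 * n + 2)) := by
  have hvol : volume (Set.Icc (-L) L) = ENNReal.ofReal (2 * L) := by
    rw [Real.volume_Icc, sub_neg_eq_add, two_mul]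
  refine (ENNReal.pow_le_pow_left_iff three_ne_zero).mp ?_
  calc _ ≤ _ := pairing_quadraticGraph_pow_three_le hγ measurableSet_Icc
        measure_Icc_lt_top.ne hE hF
    _ ≤ 8 * (ENNReal.ofReal (2 * L) * ENNReal.ofReal (L ^ (3 * n + 2))) ^ 2 := by
        rw [hvol, mul_assoc]
        gcongr
    _ = ENNReal.ofReal (32 * L ^ (6 * n + 6)) := by
        rw [← ENNReal.ofReal_mul (by positivity), ← ENNReal.ofReal_pow (by positivity),
          ← ENNReal.ofReal_ofNat 8, ← ENNReal.ofReal_mul (by norm_num)]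
        ring_nf
    _ ≤ ENNReal.ofReal ((4 * L ^ (2 * n + 2)) ^ 3) := by
        refine ENNReal.ofReal_le_ofReal ?_
        calc 32 * L ^ (6 * n + 6) ≤ 64 * L ^ (6 * n + 6) := by gcongr; norm_num
          _ = _ := by ring
    _ = _ := ENNReal.ofReal_pow (by positivity) 3

theorem pairing_tail_le {γ : ℝ[X]} {κ : ℝ} (hκ : 0 < κ) {n : ℕ}
    (hγ : ∀ b, κ * |b| ^ n ≤ |γ.derivative.derivative.eval b|) {B : Set ℝ}
    (hB : B.OrdConnected) (hBm : MeasurableSet B) (hBL : ∀ b ∈ B, L ≤ |b|)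
    (hE : MeasurableSet E) (hF : MeasurableSet F) (hL : 0 < L)
    (hEF : volume E * volume F ≤ ENNReal.ofReal (L ^ (3 * n + 8))) :
    pairing (quadraticGraph (γ.eval ·)) (Set.univ ×ˢ B) E F ≤
      ENNReal.ofReal ((1 + 48 * γ.natDegree / κ) * L ^ (2 * n + 6)) := by
  set c : ℝ := 48 * γ.natDegree / κ with hc
  have hc₀ : 0 ≤ c := by positivity
  refine (ENNReal.pow_le_pow_left_iff four_ne_zero).mp ?_
  calc _ ≤ _ := pairing_quadraticGraph_pow_four_le (by positivity)
        (expandsOn_eval_derivative hκ.le hγ hL.le hB hBL) hBm hE hF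
    _ ≤ ENNReal.ofReal (48 / (κ * L ^ n)) * γ.natDegree *
          ENNReal.ofReal (L ^ (3 * n + 8)) ^ 3 := by gcongr
    _ = ENNReal.ofReal (c * L ^ (8 * n + 24)) := by
        rw [← ENNReal.ofReal_natCast, ← ENNReal.ofReal_mul (by positivity),
          ← ENNReal.ofReal_pow (by positivity), ← ENNReal.ofReal_mul (by positivity), hc]
        congr 1
        field_simp
        ring
    _ ≤ ENNReal.ofReal (((1 + c) * L ^ (2 * n + 6)) ^ 4) := by
        refine ENNReal.ofReal_le_ofReal ?_
        calc c * L ^ (8 * n + 24) ≤ (1 + c) ^ 4 * L ^ (8 * n + 24) := by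
              gcongr
              exact (le_add_of_nonneg_left zero_le_one).trans
                (le_self_pow₀ (le_add_of_nonneg_right hc₀) four_ne_zero)
          _ = _ := by ring
    _ = _ := ENNReal.ofReal_pow (by positivity) 4

theorem pairing_quadraticGraph_univ_le {γ : ℝ[X]} {κ : ℝ} (hκ : 0 < κ) {n : ℕ}
    (hγ : ∀ b, κ * |b| ^ n ≤ |γ.derivative.derivative.eval b|)
    (hE : MeasurableSet E) (hF : MeasurableSet F) (hL : 0 < L)
    (hEF : volume E * volume F ≤ ENNReal.ofReal (L ^ (3 * n + 8))) :
    pairing (quadraticGraph (γ.eval ·)) Set.univ E F ≤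
      ENNReal.ofReal ((4 + 2 * (1 + 48 * γ.natDegree / κ)) * L ^ (2 * n + 6)) := by
  have hγm : Measurable fun b => γ.eval b := γ.continuous.measurable
  have hcover : (Set.univ : Set (ℝ × ℝ)) = Set.univ ×ˢ Set.Icc (-L) L ∪
      (Set.univ ×ˢ Set.Ioi L ∪ Set.univ ×ˢ Set.Iio (-L)) := by
    rw [← Set.prod_union, ← Set.prod_union, ← Set.univ_prod_univ]
    congr 1
    refine (Set.eq_univ_of_forall fun b => ?_).symm
    simp only [Set.mem_union, Set.mem_Icc, Set.mem_Ioi, Set.mem_Iio]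
    grind
  have hstrip := pairing_strip_le (n := n + 2) hγm hE hF hL.le (by convert hEF using 3; ring)
  have hright := pairing_tail_le hκ hγ Set.ordConnected_Ioi measurableSet_Ioi
    (fun b hb => (le_of_lt hb).trans (le_abs_self b)) hE hF hL hEF
  have hleft := pairing_tail_le hκ hγ Set.ordConnected_Iio measurableSet_Iio
    (fun b hb => (le_neg_of_le_neg (le_of_lt hb)).trans (neg_le_abs b)) hE hF hL hEF
  rw [hcover]
  calc _ ≤ _ := pairing_union_le (measurable_quadraticGraph hγm) _ _ hE hF
    _ ≤ _ := add_le_add_right (pairing_union_le (measurable_quadraticGraph hγm) _ _ hE hF) _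
    _ ≤ _ := add_le_add hstrip (add_le_add hright hleft)
    _ = _ := by
      rw [← ENNReal.ofReal_add (by positivity) (by positivity),
        ← ENNReal.ofReal_add (by positivity) (by positivity)]
      ring_nf

theorem le_ofReal_mul_rpow_of_forall_le {P V : ℝ≥0∞} (hV : V ≠ ⊤) {C : ℝ} (hC : 0 ≤ C) {m k : ℕ}
    (hm : m ≠ 0)
    (h : ∀ L : ℝ, 0 < L → V ≤ ENNReal.ofReal (L ^ m) → P ≤ ENNReal.ofReal (C * L ^ k)) :
    P ≤ ENNReal.ofReal C * V ^ ((k : ℝ) / m) := by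
  set L₀ : ℝ := V.toReal ^ (m : ℝ)⁻¹ with hL₀
  have hL₀_nonneg : 0 ≤ L₀ := by positivity
  have hL₀m : ENNReal.ofReal (L₀ ^ m) = V := by
    rw [hL₀, Real.rpow_inv_natCast_pow ENNReal.toReal_nonneg hm, ENNReal.ofReal_toReal hV]
  have hL₀k : ENNReal.ofReal (L₀ ^ k) = V ^ ((k : ℝ) / m) := by
    rw [hL₀, ← Real.rpow_natCast, ← Real.rpow_mul ENNReal.toReal_nonneg, inv_mul_eq_div,
      ← ENNReal.ofReal_rpow_of_nonneg ENNReal.toReal_nonneg (by positivity),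
      ENNReal.ofReal_toReal hV]
  have hlim : Filter.Tendsto (fun L : ℝ => ENNReal.ofReal (C * L ^ k)) (nhdsWithin L₀ (Set.Ioi L₀))
      (nhds (ENNReal.ofReal (C * L₀ ^ k))) :=
    (ENNReal.continuous_ofReal.comp (by fun_prop)).continuousWithinAt
  rw [← hL₀k, ← ENNReal.ofReal_mul hC]
  refine ge_of_tendsto hlim (eventually_nhdsWithin_of_forall fun L hL => ?_)
  refine h L (hL₀_nonneg.trans_lt hL) (hL₀m.ge.trans ?_)
  gcongr
  exact le_of_lt hL

end Balance

theorem abs_mul_abs_pow_le_abs_eval_derivative_derivative (a : ℝ) {S : ℕ} (hS : 2 ≤ S) (b : ℝ) :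
    |a| * |b| ^ (S - 2) ≤ |(Polynomial.C a * Polynomial.X ^ S).derivative.derivative.eval b| := by
  have hS₁ : (1 : ℝ) ≤ S := by exact_mod_cast (by lia : 1 ≤ S)
  have hS₂ : (1 : ℝ) ≤ (S - 1 : ℕ) := by exact_mod_cast (by lia : 1 ≤ S - 1)
  rw [derivative_C_mul_X_pow, derivative_C_mul_X_pow, Nat.sub_sub]
  simp only [Polynomial.eval_mul, Polynomial.eval_C, Polynomial.eval_pow, Polynomial.eval_X,
    abs_mul, abs_pow, Nat.abs_cast, mul_assoc |a|]
  gcongr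
  exact le_mul_of_one_le_left (by positivity) (one_le_mul_of_one_le_of_one_le hS₁ hS₂)

theorem stmt_19_general (γ : ℝ[X]) {S : ℕ} (hS : 2 ≤ S) {κ : ℝ} (hκ : 0 < κ)
    (hγ : ∀ b, κ * |b| ^ (S - 2) ≤ |γ.derivative.derivative.eval b|) :
    ∃ C : ℝ, 0 ≤ C ∧ ∀ E F : Set (ℝ × ℝ × ℝ), MeasurableSet E → MeasurableSet F →
      volume E < ⊤ → volume F < ⊤ →
      pairing (fun t => t.1 ^ 2 + γ.eval t.2) Set.univ E F ≤
        ENNReal.ofReal C * volume E ^ ((2 * (S : ℝ) + 2) / (3 * (S : ℝ) + 2))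
          * volume F ^ ((2 * (S : ℝ) + 2) / (3 * (S : ℝ) + 2)) := by
  obtain ⟨n, rfl⟩ := Nat.exists_eq_add_of_le' hS
  have hC : 0 ≤ 4 + 2 * (1 + 48 * γ.natDegree / κ) := by positivity
  refine ⟨_, hC, fun E F hE hF hE_top hF_top => ?_⟩
  have hbound := le_ofReal_mul_rpow_of_forall_le (ENNReal.mul_ne_top hE_top.ne hF_top.ne) hC
    (by lia) fun L hL hEF => pairing_quadraticGraph_univ_le hκ hγ hE hF hL hEF
  have hexp : (2 * ((n + 2 : ℕ) : ℝ) + 2) / (3 * ((n + 2 : ℕ) : ℝ) + 2) =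
      ((2 * n + 6 : ℕ) : ℝ) / (3 * n + 8 : ℕ) := by
    push_cast
    ring
  rw [hexp, mul_assoc, ← ENNReal.mul_rpow_of_nonneg _ _ (by positivity)]
  exact hbound

/-- For φ(t) = t₁² + εt₂^S (S ≥ 3, ε = ±1), the averaging operator over all of ℝ²
satisfies `⟨T χ_E, χ_F⟩ ≤ C |E|^{(2S+2)/(3S+2)} |F|^{(2S+2)/(3S+2)}`; that is, T is of
restricted weak type (p,q) with 1/p = (2S+2)/(3S+2), 1/q = S/(3S+2). -/
theorem stmt_19 (S : ℕ) (hS : 3 ≤ S) (ε : ℝ) (hε : ε = 1 ∨ ε = -1) :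
    ∃ C : ℝ, 0 ≤ C ∧ ∀ E F : Set (ℝ × ℝ × ℝ), MeasurableSet E → MeasurableSet F →
      volume E < ⊤ → volume F < ⊤ →
      pairing (fun t => t.1 ^ 2 + ε * t.2 ^ S) Set.univ E F ≤
        ENNReal.ofReal C * volume E ^ ((2 * (S : ℝ) + 2) / (3 * (S : ℝ) + 2))
          * volume F ^ ((2 * (S : ℝ) + 2) / (3 * (S : ℝ) + 2)) := by
  have hS' : 2 ≤ S := by lia
  simpa using stmt_19_general (Polynomial.C ε * Polynomial.X ^ S) hS'
    (by rcases hε with rfl | rfl <;> simp : 0 < |ε|)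
    (abs_mul_abs_pow_le_abs_eval_derivative_derivative ε hS')
end
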